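/- arXiv:1311.4677 — 2 statements merged into one kernel-verified Lean document; each statement's English description precedes it below -/
import Mathlib

section
/- Suppose A = kQ/I is a symmetric special biserial k-algebra, where Q is a connected quiver with exactly two vertices (labeled 1 and 2) and I is an admissible ideal. Then A is isomorphic to one of the following quotients of path algebras, for suitable positive integers m, p, q, r for which the listed relations generate an admissible ideal: (1) Q has arrows α: 1→2, β: 2→1, with relations (αβ)^m α = 0 and (βα)^m β = 0; (2) Q has arrows α: 1→2, β: 2→1 and a loop γ at 1, with relations either (2a) βγ = γα = 0 and γ^p = (αβ)^q, or (2b) βα = γ² = 0 and (γαβ)^m = (αβγ)^m; (3) Q has arrows α, α′: 1→2 and β, β′: 2→1, with relations either (3a) αβ′ = β′α = α′β = βα′ = 0, (αβ)^p = (α′β′)^q and (βα)^p = (β′α′)^q, or (3b) αβ′ = βα = α′β = β′α′ = 0, (αβα′β′)^m = (α′β′αβ)^m and (βα′β′α)^m = (β′αβα′)^m; (4) Q has arrows α: 1→2, β: 2→1 and loops γ at 1 and δ at 2, with relations either (4a) βγ = γα = αδ = δβ = 0, (αβ)^p = γ^q and (βα)^p = δ^r, or (4b) βα = γ² = αδ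 = δβ = 0, (γαβ)^p = (αβγ)^p and (βγα)^p = δ^q, or (4c) αβ = βα = γ² = δ² = 0, (βγαδ)^m = (δβγα)^m and (γαδβ)^m = (αδβγ)^m. -/
set_option linter.unusedSectionVars false

namespace QH
noncomputable section
section



/-! ### Path algebras of quivers, admissible ideals, special biserial algebras -/

/-- Generators for the path algebra of a quiver: an idempotent for each vertex and a generator
for each arrow. -/
inductive PGen (V E : Type) : Type
  | vert : V → PGen V E
  | arr : E → PGen V E

/-- Defining relations of the path algebra `kQ` of the quiver `Q = (V, E, s, t)`:
the vertex idempotents are orthogonal idempotents summing to `1`, and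
`e_{s(a)} · a = a = a · e_{t(a)}` for every arrow `a` (paths composed left to right). -/
inductive PathRel (k : Type) [CommRing k] (V E : Type) [Fintype V] [DecidableEq V] (s t : E → V) :
    FreeAlgebra k (PGen V E) → FreeAlgebra k (PGen V E) → Prop
  | vv (x y : V) : PathRel k V E s t
      (FreeAlgebra.ι k (PGen.vert x) * FreeAlgebra.ι k (PGen.vert y))
      (if x = y then FreeAlgebra.ι k (PGen.vert x) else 0)
  | sum_v : PathRel k V E s t (∑ x : V, FreeAlgebra.ι k (PGen.vert x)) 1
  | src (e : E) : PathRel k V E s t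
      (FreeAlgebra.ι k (PGen.vert (s e)) * FreeAlgebra.ι k (PGen.arr e))
      (FreeAlgebra.ι k (PGen.arr e))
  | tgt (e : E) : PathRel k V E s t
      (FreeAlgebra.ι k (PGen.arr e) * FreeAlgebra.ι k (PGen.vert (t e)))
      (FreeAlgebra.ι k (PGen.arr e))

/-- The path algebra `kQ` of a finite quiver. -/
abbrev PathAlg (k : Type) [CommRing k] (V E : Type) [Fintype V] [DecidableEq V] (s t : E → V) : Type :=
  RingQuot (PathRel k V E s t)

/-- The image in `kQ` of a vertex idempotent. -/
def pV (k : Type) [CommRing k] {V E : Type} [Fintype V] [DecidableEq V] (s t : E → V) (x : V) :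
    PathAlg k V E s t := RingQuot.mkAlgHom k _ (FreeAlgebra.ι k (PGen.vert x))

/-- The image in `kQ` of an arrow. -/
def pA (k : Type) [CommRing k] {V E : Type} [Fintype V] [DecidableEq V] (s t : E → V) (e : E) :
    PathAlg k V E s t := RingQuot.mkAlgHom k _ (FreeAlgebra.ι k (PGen.arr e))

/-- The arrow ideal `kQ⁺` of the path algebra (the two-sided ideal generated by the arrows),
as a `k`-submodule. -/
def arrowIdeal (k : Type) [CommRing k] {V E : Type} [Fintype V] [DecidableEq V] (s t : E → V) :
    Submodule k (PathAlg k V E s t) :=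
  ⊤ * Submodule.span k (Set.range (pA k s t)) * ⊤

/-- A `k`-submodule of an algebra is a two-sided ideal. -/
def IsTwoSidedSub {k A : Type} [CommRing k] [Ring A] [Algebra k A] (I : Submodule k A) : Prop :=
  ∀ x ∈ I, ∀ a : A, a * x ∈ I ∧ x * a ∈ I

/-- An ideal `I ⊆ kQ` is admissible if it is two-sided and `(kQ⁺)^N ⊆ I ⊆ (kQ⁺)²`
for some `N`. -/
def IsAdmissible (k : Type) [CommRing k] {V E : Type} [Fintype V] [DecidableEq V] (s t : E → V)
    (I : Submodule k (PathAlg k V E s t)) : Prop :=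
  IsTwoSidedSub I ∧ I ≤ arrowIdeal k s t ^ 2 ∧ ∃ N : ℕ, arrowIdeal k s t ^ N ≤ I

/-- The quotient algebra `kQ/I`. -/
abbrev PathQuot (k : Type) [CommRing k] {V E : Type} [Fintype V] [DecidableEq V] (s t : E → V)
    (I : Submodule k (PathAlg k V E s t)) : Type :=
  RingQuot (fun a b : PathAlg k V E s t => a - b ∈ I)

/-- The quotient map `kQ → kQ/I`. -/
def pathQuotMap (k : Type) [CommRing k] {V E : Type} [Fintype V] [DecidableEq V] (s t : E → V)
    (I : Submodule k (PathAlg k V E s t)) : PathAlg k V E s t →ₐ[k] PathQuot k s t I :=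
  RingQuot.mkAlgHom k _

/-- A quiver is connected if its underlying undirected graph is. -/
def QConnected {V E : Type} (s t : E → V) : Prop :=
  ∀ v w : V, Relation.ReflTransGen (fun a b => ∃ e, (s e = a ∧ t e = b) ∨ (s e = b ∧ t e = a)) v w

/-- A surjection `π : kQ → A` presents `A` as a special biserial algebra if at most two arrows
start and at most two arrows end at each vertex, and for each arrow `α` there is at most one
arrow `β` with `αβ ∉ ker π` and at most one arrow `γ` with `γα ∉ ker π`. -/
def SpecialBiserialPres (k : Type) [CommRing k] {V E : Type} [Fintype V] [Fintype E]
    [DecidableEq V] [DecidableEq E] (s t : E → V) {A : Type} [Ring A] [Algebra k A]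
    (π : PathAlg k V E s t →ₐ[k] A) : Prop :=
  (∀ v : V, (Finset.univ.filter fun e : E => s e = v).card ≤ 2) ∧
  (∀ v : V, (Finset.univ.filter fun e : E => t e = v).card ≤ 2) ∧
  (∀ e f f' : E, π (pA k s t e * pA k s t f) ≠ 0 → π (pA k s t e * pA k s t f') ≠ 0 → f = f') ∧
  (∀ e f f' : E, π (pA k s t f * pA k s t e) ≠ 0 → π (pA k s t f' * pA k s t e) ≠ 0 → f = f')

/-- The algebra presented by a quiver together with a set of relations. -/
inductive PresRel (k : Type) [CommRing k] (V E : Type) [Fintype V] [DecidableEq V] (s t : E → V)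
    (rels : Set (FreeAlgebra k (PGen V E))) :
    FreeAlgebra k (PGen V E) → FreeAlgebra k (PGen V E) → Prop
  | base {x y : FreeAlgebra k (PGen V E)} : PathRel k V E s t x y → PresRel k V E s t rels x y
  | rel {x : FreeAlgebra k (PGen V E)} : x ∈ rels → PresRel k V E s t rels x 0

/-- The quotient of the path algebra `kQ` by the two-sided ideal generated by `rels`. -/
abbrev PresAlg (k : Type) [CommRing k] (V E : Type) [Fintype V] [DecidableEq V] (s t : E → V)
    (rels : Set (FreeAlgebra k (PGen V E))) : Type :=
  RingQuot (PresRel k V E s t rels)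

/-- The canonical map `kQ → kQ/(rels)`. -/
def presQuotMap (k : Type) [CommRing k] {V E : Type} [Fintype V] [DecidableEq V] (s t : E → V)
    (rels : Set (FreeAlgebra k (PGen V E))) : PathAlg k V E s t →ₐ[k] PresAlg k V E s t rels :=
  RingQuot.liftAlgHom k ⟨RingQuot.mkAlgHom k _,
    fun _ _ h => RingQuot.mkAlgHom_rel k (PresRel.base h)⟩

/-- The two-sided ideal of `kQ` generated by the set of relations `rels` is admissible. -/
def RelsAdmissible (k : Type) [CommRing k] {V E : Type} [Fintype V] [DecidableEq V] (s t : E → V)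
    (rels : Set (FreeAlgebra k (PGen V E))) : Prop :=
  IsAdmissible k s t
    ((RingHom.ker (presQuotMap k s t rels).toRingHom).restrictScalars k)

end

section TwoVertex
variable (k : Type) [CommRing k]

/-- Arrow generators in the free algebra presenting a two-vertex quiver algebra. -/
def fa2 (E : Type) (e : E) : FreeAlgebra k (PGen (Fin 2) E) := FreeAlgebra.ι k (PGen.arr e)

/-- Quiver (1): arrows `α : 1 → 2` and `β : 2 → 1`. -/
def src1 : Fin 2 → Fin 2 := ![0, 1]
def tgt1 : Fin 2 → Fin 2 := ![1, 0]
/-- Relations `(αβ)^m α = 0`, `(βα)^m β = 0`. -/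
def rels1 (m : ℕ) : Set (FreeAlgebra k (PGen (Fin 2) (Fin 2))) :=
  {(fa2 k (Fin 2) 0 * fa2 k (Fin 2) 1) ^ m * fa2 k (Fin 2) 0,
   (fa2 k (Fin 2) 1 * fa2 k (Fin 2) 0) ^ m * fa2 k (Fin 2) 1}

/-- Quiver (2): arrows `0 = α : 1 → 2`, `1 = β : 2 → 1` and a loop `2 = γ` at `1`. -/
def src2 : Fin 3 → Fin 2 := ![0, 1, 0]
def tgt2 : Fin 3 → Fin 2 := ![1, 0, 0]
/-- Relations (2a): `βγ = γα = 0`, `γ^p = (αβ)^q`. -/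
def rels2a (p q : ℕ) : Set (FreeAlgebra k (PGen (Fin 2) (Fin 3))) :=
  {fa2 k (Fin 3) 1 * fa2 k (Fin 3) 2, fa2 k (Fin 3) 2 * fa2 k (Fin 3) 0,
   fa2 k (Fin 3) 2 ^ p - (fa2 k (Fin 3) 0 * fa2 k (Fin 3) 1) ^ q}
/-- Relations (2b): `βα = γ² = 0`, `(γαβ)^m = (αβγ)^m`. -/
def rels2b (m : ℕ) : Set (FreeAlgebra k (PGen (Fin 2) (Fin 3))) :=
  {fa2 k (Fin 3) 1 * fa2 k (Fin 3) 0, fa2 k (Fin 3) 2 * fa2 k (Fin 3) 2,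
   (fa2 k (Fin 3) 2 * fa2 k (Fin 3) 0 * fa2 k (Fin 3) 1) ^ m -
     (fa2 k (Fin 3) 0 * fa2 k (Fin 3) 1 * fa2 k (Fin 3) 2) ^ m}

/-- Quiver (3): arrows `0 = α, 1 = α' : 1 → 2` and `2 = β, 3 = β' : 2 → 1`. -/
def src3 : Fin 4 → Fin 2 := ![0, 0, 1, 1]
def tgt3 : Fin 4 → Fin 2 := ![1, 1, 0, 0]
/-- Relations (3a): `αβ' = β'α = α'β = βα' = 0`, `(αβ)^p = (α'β')^q`, `(βα)^p = (β'α')^q`. -/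
def rels3a (p q : ℕ) : Set (FreeAlgebra k (PGen (Fin 2) (Fin 4))) :=
  {fa2 k (Fin 4) 0 * fa2 k (Fin 4) 3, fa2 k (Fin 4) 3 * fa2 k (Fin 4) 0,
   fa2 k (Fin 4) 1 * fa2 k (Fin 4) 2, fa2 k (Fin 4) 2 * fa2 k (Fin 4) 1,
   (fa2 k (Fin 4) 0 * fa2 k (Fin 4) 2) ^ p - (fa2 k (Fin 4) 1 * fa2 k (Fin 4) 3) ^ q,
   (fa2 k (Fin 4) 2 * fa2 k (Fin 4) 0) ^ p - (fa2 k (Fin 4) 3 * fa2 k (Fin 4) 1) ^ q}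
/-- Relations (3b): `αβ' = βα = α'β = β'α' = 0`, `(αβα'β')^m = (α'β'αβ)^m`,
`(βα'β'α)^m = (β'αβα')^m`. -/
def rels3b (m : ℕ) : Set (FreeAlgebra k (PGen (Fin 2) (Fin 4))) :=
  {fa2 k (Fin 4) 0 * fa2 k (Fin 4) 3, fa2 k (Fin 4) 2 * fa2 k (Fin 4) 0,
   fa2 k (Fin 4) 1 * fa2 k (Fin 4) 2, fa2 k (Fin 4) 3 * fa2 k (Fin 4) 1,
   (fa2 k (Fin 4) 0 * fa2 k (Fin 4) 2 * fa2 k (Fin 4) 1 * fa2 k (Fin 4) 3) ^ m -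
     (fa2 k (Fin 4) 1 * fa2 k (Fin 4) 3 * fa2 k (Fin 4) 0 * fa2 k (Fin 4) 2) ^ m,
   (fa2 k (Fin 4) 2 * fa2 k (Fin 4) 1 * fa2 k (Fin 4) 3 * fa2 k (Fin 4) 0) ^ m -
     (fa2 k (Fin 4) 3 * fa2 k (Fin 4) 0 * fa2 k (Fin 4) 2 * fa2 k (Fin 4) 1) ^ m}

/-- Quiver (4): arrows `0 = α : 1 → 2`, `1 = β : 2 → 1`, a loop `2 = γ` at `1` and a loop
`3 = δ` at `2`. -/
def src4 : Fin 4 → Fin 2 := ![0, 1, 0, 1]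
def tgt4 : Fin 4 → Fin 2 := ![1, 0, 0, 1]
/-- Relations (4a): `βγ = γα = αδ = δβ = 0`, `(αβ)^p = γ^q`, `(βα)^p = δ^r`. -/
def rels4a (p q r : ℕ) : Set (FreeAlgebra k (PGen (Fin 2) (Fin 4))) :=
  {fa2 k (Fin 4) 1 * fa2 k (Fin 4) 2, fa2 k (Fin 4) 2 * fa2 k (Fin 4) 0,
   fa2 k (Fin 4) 0 * fa2 k (Fin 4) 3, fa2 k (Fin 4) 3 * fa2 k (Fin 4) 1,
   (fa2 k (Fin 4) 0 * fa2 k (Fin 4) 1) ^ p - fa2 k (Fin 4) 2 ^ q,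
   (fa2 k (Fin 4) 1 * fa2 k (Fin 4) 0) ^ p - fa2 k (Fin 4) 3 ^ r}
/-- Relations (4b): `βα = γ² = αδ = δβ = 0`, `(γαβ)^p = (αβγ)^p`, `(βγα)^p = δ^q`. -/
def rels4b (p q : ℕ) : Set (FreeAlgebra k (PGen (Fin 2) (Fin 4))) :=
  {fa2 k (Fin 4) 1 * fa2 k (Fin 4) 0, fa2 k (Fin 4) 2 * fa2 k (Fin 4) 2,
   fa2 k (Fin 4) 0 * fa2 k (Fin 4) 3, fa2 k (Fin 4) 3 * fa2 k (Fin 4) 1,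
   (fa2 k (Fin 4) 2 * fa2 k (Fin 4) 0 * fa2 k (Fin 4) 1) ^ p -
     (fa2 k (Fin 4) 0 * fa2 k (Fin 4) 1 * fa2 k (Fin 4) 2) ^ p,
   (fa2 k (Fin 4) 1 * fa2 k (Fin 4) 2 * fa2 k (Fin 4) 0) ^ p - fa2 k (Fin 4) 3 ^ q}
/-- Relations (4c): `αβ = βα = γ² = δ² = 0`, `(βγαδ)^m = (δβγα)^m`, `(γαδβ)^m = (αδβγ)^m`. -/
def rels4c (m : ℕ) : Set (FreeAlgebra k (PGen (Fin 2) (Fin 4))) :=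
  {fa2 k (Fin 4) 0 * fa2 k (Fin 4) 1, fa2 k (Fin 4) 1 * fa2 k (Fin 4) 0,
   fa2 k (Fin 4) 2 * fa2 k (Fin 4) 2, fa2 k (Fin 4) 3 * fa2 k (Fin 4) 3,
   (fa2 k (Fin 4) 1 * fa2 k (Fin 4) 2 * fa2 k (Fin 4) 0 * fa2 k (Fin 4) 3) ^ m -
     (fa2 k (Fin 4) 3 * fa2 k (Fin 4) 1 * fa2 k (Fin 4) 2 * fa2 k (Fin 4) 0) ^ m,
   (fa2 k (Fin 4) 2 * fa2 k (Fin 4) 0 * fa2 k (Fin 4) 3 * fa2 k (Fin 4) 1) ^ m -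
     (fa2 k (Fin 4) 0 * fa2 k (Fin 4) 3 * fa2 k (Fin 4) 1 * fa2 k (Fin 4) 2) ^ m}

end TwoVertex

/-- A `k`-algebra `A` is a symmetric algebra if it has a trace form. -/
def IsSymmetricAlgebra' (k A : Type) [CommRing k] [Ring A] [Algebra k A] : Prop :=
  ∃ Tr : A →ₗ[k] k, (∀ a b : A, Tr (a * b) = Tr (b * a)) ∧
    ∀ a : A, a ≠ 0 → ∃ b : A, Tr (a * b) ≠ 0

section Helpers

/-- A family of elements of an algebra satisfying the path algebra relations. -/
structure PathFam {V E A : Type} [Fintype V] [DecidableEq V] [Ring A]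
    (s t : E → V) (e : V → A) (x : E → A) : Prop where
  ee : ∀ v w, e v * e w = if v = w then e v else 0
  sum : ∑ v, e v = 1
  src : ∀ a, e (s a) * x a = x a
  tgt : ∀ a, x a * e (t a) = x a

/-- The map on generators. -/
def genMap {V E A : Type} (e : V → A) (x : E → A) : PGen V E → A
  | .vert v => e v
  | .arr a => x a

theorem pathFam_rel {k V E A : Type} [CommRing k] [Fintype V] [DecidableEq V] [Ring A]
    [Algebra k A] {s t : E → V} {e : V → A} {x : E → A} (h : PathFam s t e x)
    {a b : FreeAlgebra k (PGen V E)} (r : PathRel k V E s t a b) :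
    FreeAlgebra.lift k (genMap e x) a = FreeAlgebra.lift k (genMap e x) b := by
  cases r with
  | vv v w =>
    simp only [map_mul, FreeAlgebra.lift_ι_apply, genMap, h.ee]
    split_ifs <;> simp [genMap]
  | sum_v => simp [genMap, h.sum]
  | src a => simp [genMap, h.src]
  | tgt a => simp [genMap, h.tgt]

/-- The homomorphism from the path algebra attached to a path family. -/
def pathLift {k V E A : Type} [CommRing k] [Fintype V] [DecidableEq V] [Ring A]
    [Algebra k A] {s t : E → V} {e : V → A} {x : E → A} (h : PathFam s t e x) :
    PathAlg k V E s t →ₐ[k] A :=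
  RingQuot.liftAlgHom k ⟨FreeAlgebra.lift k (genMap e x), fun _ _ r => pathFam_rel h r⟩

theorem pathLift_pV {k V E A : Type} [CommRing k] [Fintype V] [DecidableEq V] [Ring A]
    [Algebra k A] {s t : E → V} {e : V → A} {x : E → A} (h : PathFam s t e x) (v : V) :
    pathLift (k := k) h (pV k s t v) = e v := by
  simp [pathLift, pV, genMap]

theorem pathLift_pA {k V E A : Type} [CommRing k] [Fintype V] [DecidableEq V] [Ring A]
    [Algebra k A] {s t : E → V} {e : V → A} {x : E → A} (h : PathFam s t e x) (a : E) :
    pathLift (k := k) h (pA k s t a) = x a := by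
  simp [pathLift, pA, genMap]

theorem pathFam_pV (k : Type) {V E : Type} [CommRing k] [Fintype V] [DecidableEq V]
    (s t : E → V) : PathFam s t (pV k s t) (pA k s t) where
  ee v w := by
    have := RingQuot.mkAlgHom_rel k (PathRel.vv (k := k) (s := s) (t := t) v w)
    simp only [map_mul] at this
    simp only [pV]
    rw [this]; split_ifs <;> simp
  sum := by
    have := RingQuot.mkAlgHom_rel k (PathRel.sum_v (k := k) (s := s) (t := t))
    rw [map_sum, map_one] at this
    exact this
  src a := by
    have := RingQuot.mkAlgHom_rel k (PathRel.src (k := k) (s := s) (t := t) a)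
    rw [map_mul] at this
    exact this
  tgt a := by
    have := RingQuot.mkAlgHom_rel k (PathRel.tgt (k := k) (s := s) (t := t) a)
    rw [map_mul] at this
    exact this

theorem PathFam.map {k V E A B : Type} [CommRing k] [Fintype V] [DecidableEq V] [Ring A]
    [Algebra k A] [Ring B] [Algebra k B] {s t : E → V} {e : V → A} {x : E → A}
    (h : PathFam s t e x) (f : A →ₐ[k] B) :
    PathFam s t (fun v => f (e v)) (fun a => f (x a)) where
  ee v w := by rw [← map_mul, h.ee]; split_ifs <;> simp
  sum := by rw [← map_sum, h.sum, map_one]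
  src a := by rw [← map_mul, h.src]
  tgt a := by rw [← map_mul, h.tgt]

theorem PathFam.smul {k V E A : Type} [CommRing k] [Fintype V] [DecidableEq V] [Ring A]
    [Algebra k A] {s t : E → V} {e : V → A} {x : E → A}
    (h : PathFam s t e x) (c : E → k) : PathFam s t e (fun a => c a • x a) where
  ee := h.ee
  sum := h.sum
  src a := by rw [mul_smul_comm, h.src]
  tgt a := by rw [smul_mul_assoc, h.tgt]

theorem PathFam.comp {V E V' E' A : Type} [Fintype V] [DecidableEq V] [Fintype V']
    [DecidableEq V'] [Ring A] {s t : E → V} {s' t' : E' → V'} {e : V → A} {x : E → A}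
    (h : PathFam s t e x) (τ : V' ≃ V) (ε : E' → E)
    (hs : ∀ a, s (ε a) = τ (s' a)) (ht : ∀ a, t (ε a) = τ (t' a)) :
    PathFam s' t' (fun v => e (τ v)) (fun a => x (ε a)) where
  ee v w := by
    rw [h.ee]; simp
  sum := by rw [← h.sum]; exact Equiv.sum_comp τ e
  src a := by rw [← hs, h.src]
  tgt a := by rw [← ht, h.tgt]

theorem PathFam.e_x {V E A : Type} [Fintype V] [DecidableEq V] [Ring A]
    {s t : E → V} {e : V → A} {x : E → A} (h : PathFam s t e x) (v : V) (a : E) :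
    e v * x a = if v = s a then x a else 0 := by
  rw [← h.src a, ← mul_assoc, h.ee]
  split_ifs with h1
  · rw [h1]
  · simp

theorem PathFam.x_e {V E A : Type} [Fintype V] [DecidableEq V] [Ring A]
    {s t : E → V} {e : V → A} {x : E → A} (h : PathFam s t e x) (a : E) (v : V) :
    x a * e v = if t a = v then x a else 0 := by
  rw [← h.tgt a, mul_assoc, h.ee]
  split_ifs with h1 <;> simp

theorem PathFam.x_x {V E A : Type} [Fintype V] [DecidableEq V] [Ring A]
    {s t : E → V} {e : V → A} {x : E → A} (h : PathFam s t e x) (a b : E) (hab : t a ≠ s b) :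
    x a * x b = 0 := by
  rw [← h.tgt a, mul_assoc, h.e_x, if_neg hab, mul_zero]

theorem pathAlg_hom_ext {k V E A : Type} [CommRing k] [Fintype V] [DecidableEq V] [Ring A]
    [Algebra k A] {s t : E → V} {f g : PathAlg k V E s t →ₐ[k] A}
    (hv : ∀ v, f (pV k s t v) = g (pV k s t v)) (ha : ∀ a, f (pA k s t a) = g (pA k s t a)) :
    f = g := by
  apply RingQuot.ringQuot_ext'
  apply FreeAlgebra.hom_ext
  funext y
  cases y with
  | vert v => exact hv v
  | arr a => exact ha a

theorem pathAlg_induction {k V E : Type} [CommRing k] [Fintype V] [DecidableEq V]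
    {s t : E → V} (p : PathAlg k V E s t → Prop)
    (hr : ∀ r, p (algebraMap k _ r)) (hv : ∀ v, p (pV k s t v)) (ha : ∀ a, p (pA k s t a))
    (hadd : ∀ y z, p y → p z → p (y + z)) (hmul : ∀ y z, p y → p z → p (y * z)) (y) : p y := by
  obtain ⟨z, rfl⟩ := RingQuot.mkAlgHom_surjective k _ y
  induction z using FreeAlgebra.induction with
  | grade0 r => simpa using hr r
  | grade1 g =>
    cases g with
    | vert v => exact hv v
    | arr a => exact ha a
  | mul a b ha hb => rw [map_mul]; exact hmul _ _ ha hb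
  | add a b ha hb => rw [map_add]; exact hadd _ _ ha hb

/-- The admissibility condition for a map out of a path algebra. -/
structure Adm {k V E A : Type} [CommRing k] [Fintype V] [DecidableEq V] [Ring A]
    [Algebra k A] {s t : E → V} (π : PathAlg k V E s t →ₐ[k] A) : Prop where
  le : ∀ y, π y = 0 → y ∈ arrowIdeal k s t ^ 2
  nil : ∃ N, ∀ y ∈ arrowIdeal k s t ^ N, π y = 0

theorem pA_mem {k V E : Type} [CommRing k] [Fintype V] [DecidableEq V] (s t : E → V) (a : E) :
    pA k s t a ∈ arrowIdeal k s t := by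
  have : pA k s t a = 1 * pA k s t a * 1 := by simp
  rw [this]
  exact Submodule.mul_mem_mul (Submodule.mul_mem_mul trivial
    (Submodule.subset_span ⟨a, rfl⟩)) trivial

theorem arrowIdeal_pow_map {k V E V' E' : Type} [CommRing k] [Fintype V] [DecidableEq V]
    [Fintype V'] [DecidableEq V'] {s t : E → V} {s' t' : E' → V'}
    (f : PathAlg k V E s t →ₐ[k] PathAlg k V' E' s' t')
    (hf : ∀ a, ∃ (c : k) (b : E'), f (pA k s t a) = c • pA k s' t' b) (N : ℕ)
    {y : PathAlg k V E s t} (hy : y ∈ arrowIdeal k s t ^ N) : f y ∈ arrowIdeal k s' t' ^ N := by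
  have h1 : (arrowIdeal k s t).map f.toLinearMap ≤ arrowIdeal k s' t' := by
    unfold arrowIdeal
    rw [Submodule.map_mul, Submodule.map_mul]
    refine mul_le_mul' (mul_le_mul' le_top ?_) le_top
    rw [Submodule.map_span, Submodule.span_le]
    rintro _ ⟨_, ⟨a, rfl⟩, rfl⟩
    obtain ⟨c, b, h⟩ := hf a
    change f _ ∈ _
    rw [h]
    exact Submodule.smul_mem _ _ (Submodule.subset_span ⟨b, rfl⟩)
  have h2 : (arrowIdeal k s t ^ N).map f.toLinearMap ≤ arrowIdeal k s' t' ^ N := by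
    rw [Submodule.map_pow]
    exact pow_le_pow_left' h1 N
  exact h2 ⟨y, hy, rfl⟩

theorem transfer {k V E V' E' A : Type} [Field k] [Fintype V] [DecidableEq V]
    [Fintype V'] [DecidableEq V'] [Ring A] [Algebra k A] {s t : E → V} {s' t' : E' → V'}
    (π : PathAlg k V E s t →ₐ[k] A) (hπ : Function.Surjective π) (had : Adm π)
    (τ : V' ≃ V) (ε : E' ≃ E) (c : E' → k) (hc : ∀ a, c a ≠ 0)
    (hs : ∀ a, s (ε a) = τ (s' a)) (ht : ∀ a, t (ε a) = τ (t' a)) :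
    ∃ π' : PathAlg k V' E' s' t' →ₐ[k] A, Function.Surjective π' ∧ Adm π' ∧
      (∀ v, π' (pV k s' t' v) = π (pV k s t (τ v))) ∧
      (∀ a, π' (pA k s' t' a) = c a • π (pA k s t (ε a))) := by
  have f1 := ((pathFam_pV k s t).comp τ ε (s' := s') (t' := t') hs ht).smul c
  have f2 := ((pathFam_pV k s' t').comp τ.symm ε.symm (s' := s) (t' := t)
    (fun a => by rw [Equiv.eq_symm_apply, ← hs]; simp)
    (fun a => by rw [Equiv.eq_symm_apply, ← ht]; simp)).smul (fun a => (c (ε.symm a))⁻¹)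
  let θ : PathAlg k V' E' s' t' →ₐ[k] PathAlg k V E s t := pathLift f1
  let θ' : PathAlg k V E s t →ₐ[k] PathAlg k V' E' s' t' := pathLift f2
  have e1 : θ.comp θ' = AlgHom.id k _ := by
    apply pathAlg_hom_ext
    · intro v; simp [θ, θ', pathLift_pV]
    · intro v; simp [θ, θ', pathLift_pA, smul_smul, hc]
  have e2 : θ'.comp θ = AlgHom.id k _ := by
    apply pathAlg_hom_ext
    · intro v; simp [θ, θ', pathLift_pV]
    · intro v; simp [θ, θ', pathLift_pA, smul_smul, hc]
  have e1' : ∀ y, θ (θ' y) = y := fun y => DFunLike.congr_fun e1 y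
  have e2' : ∀ y, θ' (θ y) = y := fun y => DFunLike.congr_fun e2 y
  refine ⟨π.comp θ, ?_, ⟨?_, ?_⟩, ?_, ?_⟩
  · intro y
    obtain ⟨z, rfl⟩ := hπ y
    exact ⟨θ' z, by simp [e1']⟩
  · intro y hy
    rw [← e2' y]
    exact arrowIdeal_pow_map θ' (fun a => ⟨_, _, pathLift_pA f2 a⟩) 2 (had.le _ hy)
  · obtain ⟨N, hN⟩ := had.nil
    refine ⟨N, fun y hy => hN _ ?_⟩
    exact arrowIdeal_pow_map θ (fun a => ⟨_, _, pathLift_pA f1 a⟩) N hy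
  · intro v; simp [θ, pathLift_pV]
  · intro v; simp [θ, pathLift_pA]

/-- The path of length `n` starting with `a` and following `σ`. -/
def W {V E A : Type} [Ring A] (s : E → V) (σ : E → E) (e : V → A) (x : E → A) (a : E) : ℕ → A
  | 0 => e (s a)
  | n + 1 => W s σ e x a n * x (σ^[n] a)

/-- The combinatorial data. -/
structure Comb {V E : Type} (s t : E → V) (σ : E → E) (L : E → ℕ) : Prop where
  inj : Function.Injective σ
  st : ∀ a, t a = s (σ a)
  two : ∀ a, 2 ≤ L a
  Lσ : ∀ a, L (σ a) = L a
  per : ∀ a, σ^[L a] a = a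

/-- The relations of a Brauer graph algebra. -/
structure Core {V E A : Type} [Ring A] (s : E → V) (e : V → A) (x : E → A)
    (σ : E → E) (L : E → ℕ) : Prop where
  zero : ∀ a b, b ≠ σ a → x a * x b = 0
  soc : ∀ a b, s a = s b → W s σ e x a (L a) = W s σ e x b (L b)
  fin : ∀ a b, W s σ e x a (L a) * x b = 0

section W
variable {V E A : Type} [Fintype V] [DecidableEq V] [Ring A] {s t : E → V} {e : V → A} {x : E → A}
  {σ : E → E} {L : E → ℕ}

theorem W_map {k B : Type} [CommRing k] [Algebra k A] [Ring B] [Algebra k B] (f : A →ₐ[k] B)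
    (a : E) (n : ℕ) : f (W s σ e x a n) = W s σ (fun v => f (e v)) (fun a => f (x a)) a n := by
  induction n with
  | zero => rfl
  | succ n ih => simp only [W, map_mul, ih]

theorem W_e_left (h : PathFam s t e x) (a : E) (n : ℕ) :
    e (s a) * W s σ e x a n = W s σ e x a n := by
  induction n with
  | zero => simp [W, h.ee]
  | succ n ih => rw [W, ← mul_assoc, ih]

theorem W_e_left' (h : PathFam s t e x) (v : V) (a : E) (n : ℕ) :
    e v * W s σ e x a n = if v = s a then W s σ e x a n else 0 := by
  rw [← W_e_left h, ← mul_assoc, h.ee]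
  split_ifs with h1
  · rw [h1]
  · simp

theorem W_one (h : PathFam s t e x) (a : E) : W s σ e x a 1 = x a := by
  simp [W, h.src]

theorem W_head (h : PathFam s t e x) (a : E) (n : ℕ) : ∃ y, W s σ e x a (n + 1) = x a * y := by
  induction n with
  | zero => exact ⟨1, by rw [W_one h, mul_one]⟩
  | succ n ih =>
    obtain ⟨y, hy⟩ := ih
    exact ⟨y * x (σ^[n+1] a), by rw [W, hy, mul_assoc]⟩

theorem W_cons (h : PathFam s t e x) (hσ : ∀ a, t a = s (σ a)) (a : E) (n : ℕ) :
    x a * W s σ e x (σ a) n = W s σ e x a (n + 1) := by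
  induction n with
  | zero => rw [W_one h, W, ← hσ, h.tgt]
  | succ n ih => rw [W, ← mul_assoc, ih, W.eq_2 s σ e x a (n+1), Function.iterate_succ_apply]

theorem W_e_right (h : PathFam s t e x) (hσ : ∀ a, t a = s (σ a)) (a : E) (n : ℕ) :
    W s σ e x a n * e (s (σ^[n] a)) = W s σ e x a n := by
  cases n with
  | zero => simp [W, h.ee]
  | succ n => rw [W, mul_assoc, Function.iterate_succ_apply', ← hσ, h.tgt]

theorem W_add (h : PathFam s t e x) (hσ : ∀ a, t a = s (σ a)) (a : E) (m n : ℕ) :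
    W s σ e x a m * W s σ e x (σ^[m] a) n = W s σ e x a (m + n) := by
  induction n with
  | zero => rw [W, W_e_right h hσ]; rfl
  | succ n ih =>
    rw [W, ← mul_assoc, ih, ← add_assoc, W.eq_2 s σ e x a (m+n), ← Function.iterate_add_apply,
      add_comm n m]

theorem W_mul_x (hz : ∀ a b, b ≠ σ a → x a * x b = 0) (a b : E) (n : ℕ) (hn : n ≠ 0)
    (hb : b ≠ σ^[n] a) : W s σ e x a n * x b = 0 := by
  obtain ⟨n, rfl⟩ := Nat.exists_eq_succ_of_ne_zero hn
  rw [Nat.succ_eq_add_one, Function.iterate_succ_apply'] at hb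
  rw [Nat.succ_eq_add_one, W, mul_assoc, hz _ _ hb, mul_zero]

theorem W_mul_W (h : PathFam s t e x) (hz : ∀ a b, b ≠ σ a → x a * x b = 0) (a b : E) (m n : ℕ)
    (hm : m ≠ 0) (hn : n ≠ 0) (hb : b ≠ σ^[m] a) : W s σ e x a m * W s σ e x b n = 0 := by
  obtain ⟨n, rfl⟩ := Nat.exists_eq_succ_of_ne_zero hn
  obtain ⟨y, hy⟩ := W_head (σ := σ) h b n
  rw [Nat.succ_eq_add_one, hy, ← mul_assoc, W_mul_x hz a b m hm hb, zero_mul]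

theorem W_fin_W (h : PathFam s t e x) (hc : Core s e x σ L) (a b : E) (n : ℕ)
    (hn : n ≠ 0) : W s σ e x a (L a) * W s σ e x b n = 0 := by
  obtain ⟨n, rfl⟩ := Nat.exists_eq_succ_of_ne_zero hn
  obtain ⟨y, hy⟩ := W_head (σ := σ) h b n
  rw [Nat.succ_eq_add_one, hy, ← mul_assoc, hc.fin, zero_mul]

theorem W_big (h : PathFam s t e x) (hσ : ∀ a, t a = s (σ a)) (hc : Core s e x σ L) (a : E)
    (n : ℕ) (hn : L a < n) : W s σ e x a n = 0 := by
  obtain ⟨d, rfl⟩ := Nat.exists_eq_add_of_lt hn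
  rw [add_assoc, ← W_add h hσ, W_fin_W h hc _ _ _ (by omega)]

theorem iter_L (hL : ∀ a, L (σ a) = L a) (a : E) (n : ℕ) : L (σ^[n] a) = L a := by
  induction n with
  | zero => rfl
  | succ n ih => rw [Function.iterate_succ_apply', hL, ih]

theorem W_pow (h : PathFam s t e x) (hσ : ∀ a, t a = s (σ a)) (a : E) (n p : ℕ)
    (hn : σ^[n] a = a) (hp : 1 ≤ p) : W s σ e x a (n * p) = W s σ e x a n ^ p := by
  induction p, hp using Nat.le_induction with
  | base => simp
  | succ p hp ih =>
    have h2 : σ^[n * p] a = a := by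
      rw [Function.iterate_mul]
      exact Function.iterate_fixed hn p
    rw [mul_add, mul_one, ← W_add h hσ, h2, ih, pow_succ]

end W

/-- Span of the normal forms. -/
theorem nf_span {k V E A : Type} [CommRing k] [Fintype V] [DecidableEq V] [Ring A] [Algebra k A]
    {s t : E → V} {e : V → A} {x : E → A} {σ : E → E} {L : E → ℕ}
    (π : PathAlg k V E s t →ₐ[k] A) (hπ : Function.Surjective π)
    (hv : ∀ v, π (pV k s t v) = e v) (ha : ∀ a, π (pA k s t a) = x a)
    (h : PathFam s t e x) (hcomb : Comb s t σ L) (hc : Core s e x σ L) (y : A) :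
    y ∈ Submodule.span k (Set.range e) ⊔
      (Submodule.span k (Set.range fun i : (Σ a : E, Fin (L a - 1)) =>
        W s σ e x i.1 (i.2.1 + 1)) ⊔
      Submodule.span k (Set.range fun a => W s σ e x a (L a))) := by
  set S := Submodule.span k (Set.range e) ⊔
      (Submodule.span k (Set.range fun i : (Σ a : E, Fin (L a - 1)) =>
        W s σ e x i.1 (i.2.1 + 1)) ⊔
      Submodule.span k (Set.range fun a => W s σ e x a (L a))) with hS
  have he : ∀ v, e v ∈ S := fun v =>
    Submodule.mem_sup_left (Submodule.subset_span ⟨v, rfl⟩)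
  have hW : ∀ a n, W s σ e x a n ∈ S := by
    intro a n
    rcases Nat.lt_trichotomy n (L a) with h1 | h1 | h1
    · cases n with
      | zero => exact he _
      | succ n =>
        refine Submodule.mem_sup_right (Submodule.mem_sup_left (Submodule.subset_span ?_))
        exact ⟨⟨a, ⟨n, by omega⟩⟩, rfl⟩
    · subst h1
      exact Submodule.mem_sup_right (Submodule.mem_sup_right (Submodule.subset_span ⟨a, rfl⟩))
    · rw [W_big h hcomb.st hc a n h1]; exact Submodule.zero_mem _
  have hS2 : S = Submodule.span k (Set.range e ∪ Set.range fun i : E × ℕ => W s σ e x i.1 i.2) := by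
    apply le_antisymm
    · rw [hS]
      refine sup_le (Submodule.span_mono (by simp)) (sup_le ?_ ?_)
      · apply Submodule.span_mono
        rintro _ ⟨i, rfl⟩
        exact Or.inr ⟨(i.1, _), rfl⟩
      · apply Submodule.span_mono
        rintro _ ⟨i, rfl⟩
        exact Or.inr ⟨(i, _), rfl⟩
    · rw [Submodule.span_le]
      rintro _ (⟨v, rfl⟩ | ⟨i, rfl⟩)
      · exact he v
      · exact hW _ _
  have key : ∀ y : PathAlg k V E s t, ∀ z ∈ S, z * π y ∈ S := by
    apply pathAlg_induction
    · intro r z hz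
      rw [AlgHom.commutes, ← Algebra.commutes, ← Algebra.smul_def]
      exact S.smul_mem r hz
    · intro v z hz
      rw [hS2] at hz
      rw [hv]
      induction hz using Submodule.span_induction with
      | mem z hz =>
        rcases hz with ⟨w, rfl⟩ | ⟨i, rfl⟩
        · rw [h.ee]; split_ifs
          · exact he _
          · exact S.zero_mem
        · simp only
          rw [← W_e_right h hcomb.st, mul_assoc, h.ee]
          split_ifs
          · rw [W_e_right h hcomb.st]; exact hW _ _
          · rw [mul_zero]; exact S.zero_mem
      | zero => rw [zero_mul]; exact S.zero_mem
      | add a b _ _ ha hb => rw [add_mul]; exact S.add_mem ha hb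
      | smul r a _ ha => rw [smul_mul_assoc]; exact S.smul_mem r ha
    · intro b z hz
      rw [hS2] at hz
      rw [ha]
      induction hz using Submodule.span_induction with
      | mem z hz =>
        rcases hz with ⟨w, rfl⟩ | ⟨i, rfl⟩
        · rw [h.e_x]; split_ifs
          · rw [← W_one (σ := σ) h]; exact hW _ _
          · exact S.zero_mem
        · simp only
          by_cases h1 : b = σ^[i.2] i.1
          · subst h1
            exact hW i.1 (i.2 + 1)
          · by_cases h2 : i.2 = 0
            · rw [h2, W, h.e_x]; split_ifs
              · rw [← W_one (σ := σ) h]; exact hW _ _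
              · exact S.zero_mem
            · rw [W_mul_x hc.zero _ _ _ h2 h1]; exact S.zero_mem
      | zero => rw [zero_mul]; exact S.zero_mem
      | add a b _ _ ha hb => rw [add_mul]; exact S.add_mem ha hb
      | smul r a _ ha => rw [smul_mul_assoc]; exact S.smul_mem r ha
    · intro y1 y2 h1 h2 z hz
      rw [map_add, mul_add]
      exact S.add_mem (h1 z hz) (h2 z hz)
    · intro y1 y2 h1 h2 z hz
      rw [map_mul, ← mul_assoc]
      exact h2 _ (h1 z hz)
  obtain ⟨y, rfl⟩ := hπ y
  have := key y 1 (by rw [← h.sum]; exact S.sum_mem fun v _ => he v)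
  rwa [one_mul] at this

/-- Injectivity of a map between Brauer graph algebras. -/
theorem nf_inj {k V E A B : Type} [Field k] [Fintype V] [DecidableEq V] [Fintype E]
    [Ring A] [Algebra k A] [Ring B] [Algebra k B]
    {s t : E → V} {e : V → B} {x : E → B} {σ : E → E} {L : E → ℕ}
    (π : PathAlg k V E s t →ₐ[k] B) (hπ : Function.Surjective π)
    (hv : ∀ v, π (pV k s t v) = e v) (ha : ∀ a, π (pA k s t a) = x a)
    (h : PathFam s t e x) (hcomb : Comb s t σ L) (hc : Core s e x σ L)
    (hsurj : Function.Surjective s) (φ : B →ₐ[k] A)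
    (hne : ∀ a, W s σ (fun v => φ (e v)) (fun a => φ (x a)) a (L a) ≠ 0) :
    Function.Injective φ := by
  classical
  rw [injective_iff_map_eq_zero]
  intro y hy
  obtain ⟨y1, hy1, y2, hy2, rfl⟩ := Submodule.mem_sup.1 (nf_span π hπ hv ha h hcomb hc y)
  obtain ⟨y3, hy3, y4, hy4, rfl⟩ := Submodule.mem_sup.1 hy2
  obtain ⟨c, rfl⟩ := (Submodule.mem_span_range_iff_exists_fun k).1 hy1
  obtain ⟨f, rfl⟩ := (Submodule.mem_span_range_iff_exists_fun k).1 hy3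
  obtain ⟨d, rfl⟩ := (Submodule.mem_span_range_iff_exists_fun k).1 hy4
  clear hy1 hy2 hy3 hy4
  have hne' : ∀ a, φ (W s σ e x a (L a)) ≠ 0 := fun a => by rw [W_map]; exact hne a
  have hL0 : ∀ a, L a ≠ 0 := fun a => by have := hcomb.two a; omega
  -- the coefficients of the idempotents vanish
  have hc0 : ∀ v, c v = 0 := by
    intro v
    obtain ⟨a, rfl⟩ := hsurj v
    have h1 : (∑ i, c i • e i + (∑ i : (Σ a : E, Fin (L a - 1)),
        f i • W s σ e x i.1 (i.2.1 + 1) +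
        ∑ i, d i • W s σ e x i (L i))) * W s σ e x a (L a) = c (s a) • W s σ e x a (L a) := by
      rw [add_mul, add_mul, Finset.sum_mul, Finset.sum_mul, Finset.sum_mul,
        Finset.sum_eq_single (s a), Finset.sum_eq_zero, Finset.sum_eq_zero]
      · rw [smul_mul_assoc, W_e_left h]; simp
      · intro i _
        rw [smul_mul_assoc, W_fin_W h hc _ _ _ (hL0 _), smul_zero]
      · intro i _
        rw [smul_mul_assoc]
        by_cases hi : a = σ^[i.2.1 + 1] i.1
        · rw [hi, iter_L hcomb.Lσ, W_add h hcomb.st, W_big h hcomb.st hc _ _ (by omega), smul_zero]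
        · rw [W_mul_W h hc.zero _ _ _ _ (by omega) (hL0 _) hi, smul_zero]
      · intro w _ hw
        rw [smul_mul_assoc, W_e_left' h, if_neg hw, smul_zero]
      · simp
    have h2 := congrArg φ h1
    rw [map_mul, hy, zero_mul, map_smul] at h2
    exact (smul_eq_zero.1 h2.symm).resolve_right (hne' a)
  simp only [hc0, zero_smul, Finset.sum_const_zero, zero_add] at hy ⊢
  have hf0 : ∀ n, ∀ i : (Σ a : E, Fin (L a - 1)), i.2.1 = n → f i = 0 := by
    intro n
    induction n using Nat.strong_induction_on with
    | _ n ih =>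
    intro i hi
    have hlt : n < L i.1 - 1 := hi ▸ i.2.2
    have h1 : (∑ i : (Σ a : E, Fin (L a - 1)), f i • W s σ e x i.1 (i.2.1 + 1) +
        ∑ i, d i • W s σ e x i (L i)) * W s σ e x (σ^[n+1] i.1) (L i.1 - (n+1)) =
        f i • W s σ e x i.1 (L i.1) := by
      rw [add_mul, Finset.sum_mul, Finset.sum_mul,
        Finset.sum_eq_single i]
      rw [Finset.sum_eq_zero]
      · rw [smul_mul_assoc, hi, W_add h hcomb.st, add_zero]
        congr 2; omega
      · intro j _
        rw [smul_mul_assoc, W_fin_W h hc _ _ _ (by omega), smul_zero]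
      · intro j _ hj
        rcases Nat.lt_trichotomy j.2.1 n with h3 | h3 | h3
        · rw [ih _ h3 j rfl, zero_smul, zero_mul]
        · rw [smul_mul_assoc, W_mul_W h hc.zero _ _ _ _ (by omega) (by omega), smul_zero]
          intro h4
          rw [h3] at h4
          have h5 : i.1 = j.1 := hcomb.inj.iterate _ h4
          apply hj
          obtain ⟨i1, i2⟩ := i
          obtain ⟨j1, j2⟩ := j
          simp only at h5
          subst h5
          congr 1
          ext
          simp only at hi h3
          omega
        · rw [smul_mul_assoc]
          by_cases h4 : σ^[n+1] i.1 = σ^[j.2.1 + 1] j.1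
          · have h5 : L i.1 = L j.1 := by
              rw [← iter_L hcomb.Lσ i.1 (n+1), h4, iter_L hcomb.Lσ]
            rw [h4, W_add h hcomb.st, W_big h hcomb.st hc _ _ (by omega), smul_zero]
          · rw [W_mul_W h hc.zero _ _ _ _ (by omega) (by omega) h4, smul_zero]
      · simp
    have h2 := congrArg φ h1
    rw [map_mul, hy, zero_mul, map_smul] at h2
    exact (smul_eq_zero.1 h2.symm).resolve_right (hne' i.1)
  have hf0' : ∀ i, f i = 0 := fun i => hf0 _ i rfl
  simp only [hf0', zero_smul, Finset.sum_const_zero, zero_add] at hy ⊢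
  set z := ∑ i, d i • W s σ e x i (L i) with hz
  have h1 : ∀ v, e v * z = 0 := by
    intro v
    obtain ⟨a, rfl⟩ := hsurj v
    have h2 : e (s a) * z = (∑ i, if s a = s i then d i else 0) • W s σ e x a (L a) := by
      rw [hz, Finset.mul_sum, Finset.sum_smul]
      refine Finset.sum_congr rfl fun i _ => ?_
      rw [mul_smul_comm, W_e_left' h]
      split_ifs with h3
      · rw [hc.soc a i h3]
      · simp
    have h3 := congrArg φ h2
    rw [map_mul, hy, mul_zero, map_smul] at h3
    rw [h2, (smul_eq_zero.1 h3.symm).resolve_right (hne' a), zero_smul]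
  rw [← one_mul z, ← h.sum, Finset.sum_mul, Finset.sum_eq_zero fun v _ => h1 v]

/-- Every element is a combination of idempotents and paths. -/
theorem path_span {k V E A : Type} [CommRing k] [Fintype V] [DecidableEq V] [Ring A] [Algebra k A]
    {s t : E → V} {e : V → A} {x : E → A}
    (π : PathAlg k V E s t →ₐ[k] A) (hπ : Function.Surjective π)
    (hv : ∀ v, π (pV k s t v) = e v) (ha : ∀ a, π (pA k s t a) = x a)
    (h : PathFam s t e x) (y : A) :
    y ∈ Submodule.span k (Set.range e ∪
      Set.range fun i : E × List E => x i.1 * (i.2.map x).prod) := by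
  set S := Submodule.span k (Set.range e ∪
      Set.range fun i : E × List E => x i.1 * (i.2.map x).prod) with hS
  have he : ∀ v, e v ∈ S := fun v => Submodule.subset_span (Or.inl ⟨v, rfl⟩)
  have hp : ∀ a l, x a * (List.map x l).prod ∈ S := fun a l =>
    Submodule.subset_span (Or.inr ⟨(a, l), rfl⟩)
  have hlast : ∀ (l : List E) a, ∃ u, x a * (List.map x l).prod * e u
      = x a * (List.map x l).prod := by
    intro l
    induction l with
    | nil => intro a; exact ⟨t a, by simp [h.tgt]⟩
    | cons b l ih =>
      intro a
      obtain ⟨u, hu⟩ := ih b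
      exact ⟨u, by rw [List.map_cons, List.prod_cons, mul_assoc, hu]⟩
  have key : ∀ y : PathAlg k V E s t, ∀ z ∈ S, z * π y ∈ S := by
    apply pathAlg_induction
    · intro r z hz
      rw [AlgHom.commutes, ← Algebra.commutes, ← Algebra.smul_def]
      exact S.smul_mem r hz
    · intro v z hz
      rw [hv]
      induction hz using Submodule.span_induction with
      | mem z hz =>
        rcases hz with ⟨w, rfl⟩ | ⟨i, rfl⟩
        · rw [h.ee]; split_ifs
          · exact he _
          · exact S.zero_mem
        · simp only
          obtain ⟨u, hu⟩ := hlast i.2 i.1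
          rw [← hu, mul_assoc, h.ee]
          split_ifs
          · rw [hu]; exact hp _ _
          · rw [mul_zero]; exact S.zero_mem
      | zero => rw [zero_mul]; exact S.zero_mem
      | add a b _ _ ha hb => rw [add_mul]; exact S.add_mem ha hb
      | smul r a _ ha => rw [smul_mul_assoc]; exact S.smul_mem r ha
    · intro b z hz
      rw [ha]
      induction hz using Submodule.span_induction with
      | mem z hz =>
        rcases hz with ⟨w, rfl⟩ | ⟨i, rfl⟩
        · rw [h.e_x]; split_ifs
          · simpa using hp b []
          · exact S.zero_mem
        · simpa [mul_assoc] using hp i.1 (i.2 ++ [b])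
      | zero => rw [zero_mul]; exact S.zero_mem
      | add a b _ _ ha hb => rw [add_mul]; exact S.add_mem ha hb
      | smul r a _ ha => rw [smul_mul_assoc]; exact S.smul_mem r ha
    · intro y1 y2 h1 h2 z hz
      rw [map_add, mul_add]
      exact S.add_mem (h1 z hz) (h2 z hz)
    · intro y1 y2 h1 h2 z hz
      rw [map_mul, ← mul_assoc]
      exact h2 _ (h1 z hz)
  obtain ⟨y, rfl⟩ := hπ y
  have := key y 1 (by rw [← h.sum]; exact S.sum_mem fun v _ => he v)
  rwa [one_mul] at this

/-- A test homomorphism detecting an arrow modulo the square of the arrow ideal. -/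
theorem exists_chi (k : Type) {V E : Type} [Field k] [Fintype V] [DecidableEq V] [DecidableEq E]
    (s t : E → V) (a : E) :
    ∃ χ : PathAlg k V E s t →ₐ[k] Matrix V V (DualNumber k),
      χ (pA k s t a) ≠ 0 ∧ (∀ b, b ≠ a → χ (pA k s t b) = 0) ∧
      ∀ y ∈ arrowIdeal k s t ^ 2, χ y = 0 := by
  have fam : PathFam s t (fun v => (Matrix.single v v 1 : Matrix V V (DualNumber k)))
      (fun b => if b = a then Matrix.single (s b) (t b) DualNumber.eps else 0) := by
    constructor
    · intro v w
      split_ifs with h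
      · subst h; simp
      · simp [h]
    · rw [Matrix.sum_single_eq_diagonal]
      simp
    · intro b; split_ifs <;> simp
    · intro b; split_ifs <;> simp
  refine ⟨pathLift fam, ?_, ?_, ?_⟩
  · rw [pathLift_pA, if_pos rfl]
    intro h
    have h2 := congrArg (fun M : Matrix V V (DualNumber k) => (M (s a) (t a)).snd) h
    simp at h2
  · intro b hb
    rw [pathLift_pA, if_neg hb]
  · let N : Submodule k (Matrix V V (DualNumber k)) :=
      { carrier := {M | ∀ i j, (M i j).fst = 0}
        add_mem' := fun {a b} ha hb i j => by simp [ha i j, hb i j]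
        zero_mem' := fun i j => by simp
        smul_mem' := fun c a ha i j => by simp [ha i j] }
    have hN1 : ∀ M ∈ N, ∀ M', M * M' ∈ N := by
      intro M hM M' i j
      rw [Matrix.mul_apply, TrivSqZeroExt.fst_sum]
      exact Finset.sum_eq_zero fun l _ => by simp [hM i l]
    have hN2 : ∀ M ∈ N, ∀ M', M' * M ∈ N := by
      intro M hM M' i j
      rw [Matrix.mul_apply, TrivSqZeroExt.fst_sum]
      exact Finset.sum_eq_zero fun l _ => by simp [hM l j]
    have hN3 : N * N ≤ ⊥ := by
      rw [Submodule.mul_le]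
      intro M hM M' hM'
      rw [Submodule.mem_bot]
      ext i j
      · exact hN1 M hM M' i j
      · rw [Matrix.mul_apply, TrivSqZeroExt.snd_sum]
        exact Finset.sum_eq_zero fun l _ => by simp [hM i l, hM' l j]
    have hJ : (arrowIdeal k s t).map (pathLift (k := k) fam).toLinearMap ≤ N := by
      unfold arrowIdeal
      rw [Submodule.map_mul, Submodule.map_mul, Submodule.mul_le]
      intro M hM M' _
      refine hN1 M ?_ M'
      revert M
      rw [← SetLike.le_def, Submodule.mul_le]
      intro M _ M' hM'
      refine hN2 M' ?_ M
      revert M'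
      rw [← SetLike.le_def, Submodule.map_span, Submodule.span_le]
      rintro _ ⟨_, ⟨b, rfl⟩, rfl⟩
      change pathLift fam _ ∈ N
      rw [pathLift_pA]
      intro i j
      split_ifs
      · rw [Matrix.single_apply]
        split_ifs <;> simp
      · simp
    intro y hy
    have h2 : (arrowIdeal k s t ^ 2).map (pathLift (k := k) fam).toLinearMap ≤ ⊥ := by
      rw [Submodule.map_pow, pow_two]
      exact le_trans (mul_le_mul' hJ hJ) hN3
    exact (Submodule.mem_bot k).1 (h2 ⟨y, hy, rfl⟩)

theorem arrow_ne_zero {k V E A : Type} [Field k] [Fintype V] [DecidableEq V] [DecidableEq E]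
    [Ring A] [Algebra k A] {s t : E → V} (π : PathAlg k V E s t →ₐ[k] A) (had : Adm π) (a : E) :
    π (pA k s t a) ≠ 0 := by
  obtain ⟨χ, h1, h2, h3⟩ := exists_chi k s t a
  exact fun h => h1 (h3 _ (had.le _ h))

theorem arrow_ne_mul {k V E A : Type} [Field k] [Fintype V] [DecidableEq V] [DecidableEq E]
    [Ring A] [Algebra k A] {s t : E → V} (π : PathAlg k V E s t →ₐ[k] A)
    (hπ : Function.Surjective π) (had : Adm π) (a b : E) (hab : b ≠ a) (y : A) :
    π (pA k s t a) ≠ π (pA k s t b) * y := by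
  obtain ⟨χ, h1, h2, h3⟩ := exists_chi k s t a
  obtain ⟨y, rfl⟩ := hπ y
  intro h
  have h4 : π (pA k s t a - pA k s t b * y) = 0 := by rw [map_sub, map_mul, h, sub_self]
  have h5 := h3 _ (had.le _ h4)
  rw [map_sub, map_mul, h2 b hab, zero_mul, sub_zero] at h5
  exact h1 h5

theorem W_nil {k V E A : Type} [Field k] [Fintype V] [DecidableEq V]
    [Ring A] [Algebra k A] {s t : E → V} (π : PathAlg k V E s t →ₐ[k] A) (had : Adm π)
    (h : PathFam s t (fun v => π (pV k s t v)) (fun a => π (pA k s t a))) (σ : E → E) (a : E) :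
    ∃ n, 1 ≤ n ∧ W s σ (fun v => π (pV k s t v)) (fun a => π (pA k s t a)) a n = 0 := by
  obtain ⟨N, hN⟩ := had.nil
  have key : ∀ n, ∃ y ∈ arrowIdeal k s t ^ (n + 1),
      π y = W s σ (fun v => π (pV k s t v)) (fun a => π (pA k s t a)) a (n + 1) := by
    intro n
    induction n with
    | zero => exact ⟨pA k s t a, by simpa using pA_mem s t a, by rw [W_one h]⟩
    | succ n ih =>
      obtain ⟨y, hy, hy2⟩ := ih
      refine ⟨y * pA k s t (σ^[n+1] a), ?_, ?_⟩
      · rw [pow_succ]; exact Submodule.mul_mem_mul hy (pA_mem s t _)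
      · rw [map_mul, hy2, W.eq_2 _ _ _ _ _ (n+1)]
  refine ⟨N + 1, by omega, ?_⟩
  obtain ⟨y, hy, hy2⟩ := key N
  rw [pow_succ] at hy
  rw [← hy2]
  clear hy2
  induction hy using Submodule.mul_induction_on' with
  | mem_mul_mem m hm n _ => rw [map_mul, hN m hm, zero_mul]
  | add a _ b _ ha hb => rw [map_add, ha, hb, add_zero]

theorem soc_lemma {k V E A : Type} [Field k] [Fintype V] [DecidableEq V] [Ring A] [Algebra k A]
    {s t : E → V} {e : V → A} {x : E → A}
    (π : PathAlg k V E s t →ₐ[k] A) (hπ : Function.Surjective π)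
    (hv : ∀ v, π (pV k s t v) = e v) (ha : ∀ a, π (pA k s t a) = x a)
    (h : PathFam s t e x) (Tr : A →ₗ[k] k) (hTr : ∀ a b : A, Tr (a * b) = Tr (b * a))
    (hnd : ∀ a : A, a ≠ 0 → ∃ b : A, Tr (a * b) ≠ 0)
    (z : A) (v : V) (hz : e v * z = z) (hzx : ∀ c, z * x c = 0) (hz0 : z ≠ 0) : Tr z ≠ 0 := by
  intro hcon
  obtain ⟨y, hy⟩ := hnd z hz0
  apply hy
  have hy2 := path_span π hπ hv ha h y
  clear hy
  induction hy2 using Submodule.span_induction with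
  | mem y hy =>
    rcases hy with ⟨w, rfl⟩ | ⟨i, rfl⟩
    · rw [hTr, ← hz, ← mul_assoc, h.ee]
      split_ifs with h1
      · rw [h1, hz, hcon]
      · simp
    · simp only
      rw [← mul_assoc, hzx, zero_mul, map_zero]
  | zero => simp
  | add a b _ _ ha hb => rw [mul_add, map_add, ha, hb, add_zero]
  | smul r a _ ha => rw [mul_smul_comm, map_smul, ha, smul_zero]

theorem connected_arrow {E : Type} {s t : E → Fin 2} (hconn : QConnected s t) :
    ∃ c, s c ≠ t c := by
  by_contra hcon
  push Not at hcon
  have h := hconn 0 1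
  have : ∀ v w : Fin 2, Relation.ReflTransGen
      (fun a b => ∃ e, (s e = a ∧ t e = b) ∨ (s e = b ∧ t e = a)) v w → v = w := by
    intro v w hvw
    induction hvw with
    | refl => rfl
    | tail _ h1 ih =>
      obtain ⟨e, ⟨h2, h3⟩ | ⟨h2, h3⟩⟩ := h1
      · rw [ih, ← h2, ← h3, hcon]
      · rw [ih, ← h2, ← h3, hcon]
  exact absurd (this 0 1 h) (by decide)

theorem W_smul {k V E A : Type} [CommRing k] [Ring A] [Algebra k A] {s : E → V}
    {e : V → A} {x : E → A} {σ : E → E} (c : E → k) (hc : ∀ a, c (σ a) = c a) (a : E) (n : ℕ) :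
    W s σ e (fun a => c a • x a) a n = c a ^ n • W s σ e x a n := by
  have hc' : ∀ n, c (σ^[n] a) = c a := by
    intro n
    induction n with
    | zero => rfl
    | succ n ih => rw [Function.iterate_succ_apply', hc, ih]
  induction n with
  | zero => simp [W]
  | succ n ih => rw [W, ih, W, hc', smul_mul_smul_comm, pow_succ]

theorem struct_lemma {k E A : Type} [Field k] [IsAlgClosed k] [Fintype E] [DecidableEq E]
    [Ring A] [Algebra k A] {s t : E → Fin 2} (hconn : QConnected s t)
    (π : PathAlg k (Fin 2) E s t →ₐ[k] A) (hπ : Function.Surjective π) (had : Adm π)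
    (hsym : IsSymmetricAlgebra' k A)
    (hsb1 : ∀ e f f' : E, π (pA k s t e * pA k s t f) ≠ 0 →
      π (pA k s t e * pA k s t f') ≠ 0 → f = f')
    (hsb2 : ∀ e f f' : E, π (pA k s t f * pA k s t e) ≠ 0 →
      π (pA k s t f' * pA k s t e) ≠ 0 → f = f') :
    ∃ (c : E → k) (σ : E → E) (L : E → ℕ), (∀ a, c a ≠ 0) ∧ Comb s t σ L ∧
      Core s (fun v => π (pV k s t v)) (fun a => c a • π (pA k s t a)) σ L ∧
      ∀ a, W s σ (fun v => π (pV k s t v)) (fun a => c a • π (pA k s t a)) a (L a) ≠ 0 := by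
  classical
  obtain ⟨Tr, hTr, hnd⟩ := hsym
  have h : PathFam s t (fun v => π (pV k s t v)) (fun a => π (pA k s t a)) :=
    (pathFam_pV k s t).map π
  have hnil := W_nil π had h
  have hx0 : ∀ a, π (pA k s t a) ≠ 0 := arrow_ne_zero π had
  have hxm := arrow_ne_mul π hπ had
  have hsoc := soc_lemma (e := fun v => π (pV k s t v)) (x := fun a => π (pA k s t a)) π hπ
    (fun _ => rfl) (fun _ => rfl) h Tr hTr hnd
  have hspan := path_span (e := fun v => π (pV k s t v)) (x := fun a => π (pA k s t a)) π hπ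
    (fun _ => rfl) (fun _ => rfl) h
  simp only [map_mul] at hsb1 hsb2
  generalize hedef : (fun v => π (pV k s t v)) = e at *
  generalize hxdef : (fun a => π (pA k s t a)) = x at *
  have hxa : ∀ a, π (pA k s t a) = x a := fun a => congrFun hxdef a
  have hea : ∀ a, π (pV k s t a) = e a := fun a => congrFun hedef a
  simp only [hxa, hea] at hsb1 hsb2 hx0 hxm hsoc hspan ⊢
  clear hedef hxdef hxa hea had
  -- the successor function
  obtain ⟨σ, hσ⟩ : ∃ σ : E → E, ∀ a b, b ≠ σ a → x a * x b = 0 := by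
    have : ∀ a, ∃ c, ∀ b, b ≠ c → x a * x b = 0 := by
      intro a
      by_cases h1 : ∃ c, x a * x c ≠ 0
      · obtain ⟨c, hc⟩ := h1
        refine ⟨c, fun b hb => ?_⟩
        by_contra h2
        exact hb (hsb1 a b c h2 hc)
      · push Not at h1
        exact ⟨a, fun b _ => h1 b⟩
    choose σ hσ using this
    exact ⟨σ, hσ⟩
  -- maximal paths
  have hmax : ∀ a, ∃ n, 1 ≤ n ∧ W s σ e x a n ≠ 0 ∧ W s σ e x a (n + 1) = 0 := by
    intro a
    have hex : ∃ n, W s σ e x a (n + 1) = 0 := by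
      obtain ⟨n, hn, hn2⟩ := hnil σ a
      exact ⟨n - 1, by rwa [Nat.sub_add_cancel hn]⟩
    refine ⟨Nat.find hex, ?_, ?_, Nat.find_spec hex⟩
    · rw [Nat.one_le_iff_ne_zero]
      intro h0
      have := Nat.find_spec hex
      rw [h0, zero_add, W_one h] at this
      exact hx0 a this
    · intro h0
      have h1 : Nat.find hex ≠ 0 := by
        intro h0
        have := Nat.find_spec hex
        rw [h0, zero_add, W_one h] at this
        exact hx0 a this
      obtain ⟨m, hm⟩ := Nat.exists_eq_succ_of_ne_zero h1
      rw [hm] at h0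
      exact Nat.find_min hex (m := m) (by omega) h0
  choose L hL1 hL2 hL3 using hmax
  have hfin : ∀ a b, W s σ e x a (L a) * x b = 0 := by
    intro a b
    by_cases hb : b = σ^[L a] a
    · rw [hb]; exact hL3 a
    · exact W_mul_x hσ a b _ (by have := hL1 a; omega) hb
  have hT : ∀ a, Tr (W s σ e x a (L a)) ≠ 0 := fun a =>
    hsoc _ (s a) (W_e_left h a _) (hfin a) (hL2 a)
  -- every arrow can be continued
  have hcont : ∀ a, x a * x (σ a) ≠ 0 := by
    intro a h0
    have hall : ∀ b, x a * x b = 0 := by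
      intro b
      by_cases hb : b = σ a
      · rw [hb, h0]
      · exact hσ a b hb
    have hTa : Tr (x a) ≠ 0 := hsoc _ (s a) (h.src a) hall (hx0 a)
    have hloop : s a = t a := by
      by_contra hne
      apply hTa
      rw [← h.tgt a, hTr, h.e_x, if_neg (Ne.symm hne), map_zero]
    obtain ⟨b, hb, hba⟩ : ∃ b, s b = s a ∧ b ≠ a := by
      by_contra hcon
      push Not at hcon
      obtain ⟨c, hc⟩ := connected_arrow hconn
      have hcv : s c ≠ s a := by
        intro h1
        have h2 := hcon c h1
        rw [h2] at hc
        exact hc hloop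
      have hcw : t c = s a := by
        revert hcv hc
        generalize s c = p
        generalize t c = q
        generalize s a = r
        revert p q r
        decide
      obtain ⟨y, hy⟩ := hnd (x c) (hx0 c)
      have h1 : ∀ y, e (s a) * y * e (s c) = 0 := by
        intro y
        have hy2 := hspan y
        induction hy2 using Submodule.span_induction with
        | mem y hy =>
          rcases hy with ⟨w, rfl⟩ | ⟨⟨b, l⟩, rfl⟩
          · rw [h.ee]; split_ifs with h1
            · rw [h.ee, if_neg (Ne.symm hcv)]
            · rw [zero_mul]
          · simp only
            rw [← mul_assoc, h.e_x]
            split_ifs with h1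
            · have h2 := hcon b h1.symm
              subst h2
              cases l with
              | nil =>
                simp only [List.map_nil, List.prod_nil, mul_one]
                rw [h.x_e, if_neg (by rw [← hloop]; exact Ne.symm hcv)]
              | cons d l =>
                rw [List.map_cons, List.prod_cons, ← mul_assoc, hall, zero_mul, zero_mul]
            · rw [zero_mul, zero_mul]
        | zero => simp
        | add a b _ _ ha hb => rw [mul_add, add_mul, ha, hb, add_zero]
        | smul r a _ ha => rw [mul_smul_comm, smul_mul_assoc, ha, smul_zero]
      apply hy
      rw [← h.src c, ← h.tgt c, hcw, mul_assoc, hTr, mul_assoc, mul_assoc, ← mul_assoc (e (s a)),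
        h1, mul_zero, map_zero]
    obtain ⟨m, hm⟩ := Nat.exists_eq_add_of_le' (hL1 b)
    obtain ⟨y, hy⟩ := W_head (σ := σ) h b m
    rw [← hm] at hy
    set z := W s σ e x b (L b) with hz
    have hd : x a = (Tr (x a) / Tr z) • z := by
      by_contra hne
      have hne2 : x a - (Tr (x a) / Tr z) • z ≠ 0 := sub_ne_zero.2 hne
      refine hsoc _ (s a) ?_ ?_ hne2 ?_
      · rw [mul_sub, h.src, mul_smul_comm, hz, ← hb, W_e_left h]
      · intro c
        rw [sub_mul, hall, smul_mul_assoc, hfin, smul_zero, sub_zero]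
      · rw [map_sub, map_smul, smul_eq_mul, div_mul_cancel₀ _ (hT b), sub_self]
    rw [hy, ← mul_smul_comm] at hd
    exact hxm a b hba _ hd
  have hst : ∀ a, t a = s (σ a) := by
    intro a
    by_contra hne
    exact hcont a (h.x_x _ _ hne)
  have hinj : Function.Injective σ := by
    intro a b hab
    refine hsb2 (σ a) a b (hcont a) ?_
    rw [hab]; exact hcont b
  have hL22 : ∀ a, 2 ≤ L a := by
    intro a
    by_contra hlt
    have h1 : L a = 1 := by have := hL1 a; omega
    have h2 := hL3 a
    rw [h1, ← W_cons h hst, W_one h] at h2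
    exact hcont a h2
  have hcore_big : ∀ a n, L a < n → W s σ e x a n = 0 := by
    intro a n hn
    obtain ⟨d, rfl⟩ := Nat.exists_eq_add_of_lt hn
    obtain ⟨y, hy⟩ := W_head (σ := σ) h (σ^[L a] a) d
    rw [add_assoc, ← W_add h hst, hy, ← mul_assoc, hfin, zero_mul]
  have hrot : ∀ a, ∃ b, σ b = a ∧ σ^[L a] a = a ∧ L a ≤ L b ∧
      Tr (W s σ e x b (L a)) = Tr (W s σ e x a (L a)) := by
    intro a
    obtain ⟨m, hm⟩ := Nat.exists_eq_add_of_le' (hL1 a)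
    have h1 : Tr (W s σ e x a (L a)) = Tr (x (σ^[m] a) * W s σ e x a m) := by
      rw [hm, W, hTr]
    have hm0 : m ≠ 0 := by have := hL22 a; omega
    have h2 : a = σ (σ^[m] a) := by
      by_contra hne
      apply hT a
      obtain ⟨m', hm'⟩ := Nat.exists_eq_succ_of_ne_zero hm0
      obtain ⟨y, hy⟩ := W_head (σ := σ) h a m'
      have h3 : W s σ e x a m = x a * y := by rw [hm']; exact hy
      rw [h1, h3, ← mul_assoc, hσ _ _ hne, zero_mul, map_zero]
    have h3 : x (σ^[m] a) * W s σ e x a m = W s σ e x (σ^[m] a) (L a) := by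
      have h4 := W_cons h hst (σ^[m] a) m
      rw [← h2] at h4
      rw [h4, hm]
    refine ⟨σ^[m] a, h2.symm, ?_, ?_, ?_⟩
    · rw [hm, Function.iterate_succ_apply', ← h2]
    · by_contra hlt
      apply hT a
      rw [h1, h3, hcore_big _ _ (by omega), map_zero]
    · rw [h1, h3]
  have hbij : Function.Bijective σ := Finite.injective_iff_bijective.1 hinj
  have hLle : ∀ b, L (σ b) ≤ L b := by
    intro b
    obtain ⟨b', hb', _, hle, _⟩ := hrot (σ b)
    rw [hinj hb'] at hle
    exact hle
  have hLσ : ∀ b, L (σ b) = L b := by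
    have h1 : ∑ b, L (σ b) = ∑ b, L b := hbij.sum_comp L
    have h2 := (Finset.sum_eq_sum_iff_of_le (fun b _ => hLle b)).1 h1
    exact fun b => h2 b (Finset.mem_univ b)
  have hTσ : ∀ b, Tr (W s σ e x (σ b) (L (σ b))) = Tr (W s σ e x b (L b)) := by
    intro b
    obtain ⟨b', hb', _, _, h1⟩ := hrot (σ b)
    rw [hinj hb'] at h1
    rw [← h1, hLσ]
  -- rescaling
  have hroot : ∀ (n : ℕ) (r : k), ∃ c : k, 2 ≤ n → r ≠ 0 → c ^ n * r = 1 := by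
    intro n r
    by_cases hn : 2 ≤ n
    · obtain ⟨c, hc⟩ := IsAlgClosed.exists_pow_nat_eq (r⁻¹) (n := n) (by omega)
      exact ⟨c, fun _ hr => by rw [hc, inv_mul_cancel₀ hr]⟩
    · exact ⟨0, fun h1 => absurd h1 hn⟩
  choose g hg using hroot
  let c : E → k := fun a => g (L a) (Tr (W s σ e x a (L a)))
  have hcT : ∀ a, c a ^ L a * Tr (W s σ e x a (L a)) = 1 := fun a => hg _ _ (hL22 a) (hT a)
  have hc0 : ∀ a, c a ≠ 0 := by
    intro a h0
    have := hcT a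
    rw [h0, zero_pow (by have := hL1 a; omega), zero_mul] at this
    exact zero_ne_one this
  have hcσ : ∀ a, c (σ a) = c a := by
    intro a
    simp only [c]
    rw [hTσ, hLσ]
  have hW' : ∀ a n, W s σ e (fun a => c a • x a) a n = c a ^ n • W s σ e x a n :=
    W_smul c hcσ
  refine ⟨c, σ, L, hc0, ⟨hinj, hst, hL22, hLσ, fun a => ?_⟩, ⟨?_, ?_, ?_⟩, ?_⟩
  · obtain ⟨_, _, h1, _⟩ := hrot a
    exact h1
  · intro a b hab
    rw [smul_mul_smul_comm, hσ a b hab, smul_zero]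
  · intro a b hab
    rw [hW', hW']
    by_contra hne
    refine hsoc _ (s a) ?_ ?_ (sub_ne_zero.2 hne) ?_
    · rw [mul_sub, mul_smul_comm, mul_smul_comm, W_e_left h, hab, W_e_left h]
    · intro d
      rw [sub_mul, smul_mul_assoc, smul_mul_assoc, hfin, hfin]
      simp
    · rw [map_sub, map_smul, map_smul, smul_eq_mul, smul_eq_mul, hcT, hcT, sub_self]
  · intro a b
    rw [hW', smul_mul_smul_comm, hfin, smul_zero]
  · intro a
    rw [hW']
    exact smul_ne_zero (pow_ne_zero _ (hc0 a)) (hL2 a)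

/-- An algebra with full Brauer graph data. -/
structure Full (k : Type) {E A : Type} [Field k] [Ring A] [Algebra k A] (s t : E → Fin 2)
    (e : Fin 2 → A) (x : E → A) (σ : E → E) (L : E → ℕ) : Prop where
  ex : ∃ π : PathAlg k (Fin 2) E s t →ₐ[k] A, Function.Surjective π ∧ Adm π ∧
    (∀ v, π (pV k s t v) = e v) ∧ (∀ a, π (pA k s t a) = x a)
  comb : Comb s t σ L
  core : Core s e x σ L
  ne : ∀ a, W s σ e x a (L a) ≠ 0

theorem Full.fam {k E A : Type} [Field k] [Ring A] [Algebra k A] {s t : E → Fin 2}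
    {e : Fin 2 → A} {x : E → A} {σ : E → E} {L : E → ℕ} (h : Full k s t e x σ L) :
    PathFam s t e x := by
  obtain ⟨π, _, _, h1, h2⟩ := h.ex
  have := (pathFam_pV k s t).map π
  simpa only [h1, h2] using this

theorem W_relabel {V V' E E' A : Type} [Ring A] {s : E → V} {s' : E' → V'}
    {e : V → A} {x : E → A} {σ : E → E} {σ' : E' → E'} (τ : V' → V) (ε : E' → E)
    (hs : ∀ a, s (ε a) = τ (s' a)) (hσ : ∀ a, ε (σ' a) = σ (ε a)) (a : E') (n : ℕ) :
    W s' σ' (fun v => e (τ v)) (fun a => x (ε a)) a n = W s σ e x (ε a) n := by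
  have hit : ∀ n, ε (σ'^[n] a) = σ^[n] (ε a) := by
    intro n
    induction n with
    | zero => rfl
    | succ n ih => rw [Function.iterate_succ_apply', hσ, ih, Function.iterate_succ_apply']
  induction n with
  | zero => simp only [W, hs]
  | succ n ih => simp only [W, hit, ih]

theorem Full.relabel {k E E' A : Type} [Field k] [Ring A] [Algebra k A] {s t : E → Fin 2}
    {s' t' : E' → Fin 2}
    {e : Fin 2 → A} {x : E → A} {σ : E → E} {L : E → ℕ} (h : Full k s t e x σ L)
    (τ : Fin 2 ≃ Fin 2) (ε : E' ≃ E) (σ' : E' → E')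
    (hs : ∀ a, s (ε a) = τ (s' a)) (ht : ∀ a, t (ε a) = τ (t' a))
    (hσ : ∀ a, ε (σ' a) = σ (ε a)) :
    Full k s' t' (fun v => e (τ v)) (fun a => x (ε a)) σ' (fun a => L (ε a)) := by
  have hit : ∀ a n, ε (σ'^[n] a) = σ^[n] (ε a) := by
    intro a n
    induction n with
    | zero => rfl
    | succ n ih => rw [Function.iterate_succ_apply', hσ, ih, Function.iterate_succ_apply']
  have hW := W_relabel (e := e) (x := x) τ ε hs hσ
  refine ⟨?_, ⟨?_, ?_, ?_, ?_, ?_⟩, ⟨?_, ?_, ?_⟩, ?_⟩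
  · obtain ⟨π, h1, h2, h3, h4⟩ := h.ex
    obtain ⟨π', g1, g2, g3, g4⟩ := transfer π h1 h2 τ ε (fun _ => 1) (by simp) hs ht
    exact ⟨π', g1, g2, fun v => by rw [g3, h3], fun a => by rw [g4, h4, one_smul]⟩
  · intro a b hab
    have := congrArg ε hab
    rw [hσ, hσ] at this
    exact ε.injective (h.comb.inj this)
  · intro a
    apply τ.injective
    rw [← hs, ← ht, hσ, h.comb.st]
  · intro a; exact h.comb.two _
  · intro a; simp only [hσ, h.comb.Lσ]
  · intro a
    apply ε.injective
    rw [hit, h.comb.per]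
  · intro a b hab
    apply h.core.zero
    rw [← hσ]
    exact fun hh => hab (ε.injective hh)
  · intro a b hab
    rw [hW, hW]
    apply h.core.soc
    rw [hs, hs, hab]
  · intro a b
    rw [hW]
    exact h.core.fin _ _
  · intro a
    rw [hW]
    exact h.ne _

theorem finish {k E A : Type} [Field k] [Fintype E] [Ring A] [Algebra k A] {s t : E → Fin 2}
    {e : Fin 2 → A} {x : E → A} {σ : E → E} {L : E → ℕ} (h : Full k s t e x σ L)
    (hsurj : Function.Surjective s) (rels : Set (FreeAlgebra k (PGen (Fin 2) E)))
    (H : ∀ (C : Type) [Ring C] [Algebra k C] (e : Fin 2 → C) (x : E → C), PathFam s t e x →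
      ((∀ r ∈ rels, FreeAlgebra.lift k (genMap e x) r = 0) ↔ Core s e x σ L)) :
    RelsAdmissible k s t rels ∧ Nonempty (A ≃ₐ[k] PresAlg k (Fin 2) E s t rels) := by
  obtain ⟨π, hπ, had, hv, ha⟩ := h.ex
  set q := presQuotMap k s t rels with hq
  have hqs : Function.Surjective q := by
    intro y
    obtain ⟨z, rfl⟩ := RingQuot.mkAlgHom_surjective k _ y
    exact ⟨RingQuot.mkAlgHom k _ z, by simp [hq, presQuotMap]⟩
  have hfB : PathFam s t (fun v => q (pV k s t v)) (fun a => q (pA k s t a)) :=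
    (pathFam_pV k s t).map q
  have hlift : FreeAlgebra.lift k (genMap (fun v => q (pV k s t v)) (fun a => q (pA k s t a))) =
      RingQuot.mkAlgHom k (PresRel k (Fin 2) E s t rels) := by
    apply FreeAlgebra.hom_ext
    funext y
    cases y with
    | vert v => simp [genMap, hq, presQuotMap, pV]
    | arr a => simp [genMap, hq, presQuotMap, pA]
  have hcB := (H _ _ _ hfB).1 (by
    intro r hr
    rw [hlift]
    have := RingQuot.mkAlgHom_rel k (PresRel.rel (s := s) (t := t) hr)
    rw [map_zero] at this
    exact this)
  have hrA := (H _ _ _ h.fam).2 h.core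
  let φ : PresAlg k (Fin 2) E s t rels →ₐ[k] A :=
    RingQuot.liftAlgHom k ⟨FreeAlgebra.lift k (genMap e x), by
      intro a b r
      cases r with
      | base r => exact pathFam_rel h.fam r
      | rel r => rw [hrA _ r, map_zero]⟩
  have hφπ : φ.comp q = π := by
    apply pathAlg_hom_ext
    · intro v
      rw [hv]
      simp [φ, hq, presQuotMap, pV, genMap]
    · intro v
      rw [ha]
      simp [φ, hq, presQuotMap, pA, genMap]
  have hφ : ∀ y, φ (q y) = π y := fun y => DFunLike.congr_fun hφπ y
  have hinj : Function.Injective φ := by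
    refine nf_inj q hqs (fun _ => rfl) (fun _ => rfl) hfB h.comb hcB hsurj φ ?_
    intro a
    simp only [hφ, hv, ha]
    exact h.ne a
  have hsur : Function.Surjective φ := by
    intro y
    obtain ⟨z, rfl⟩ := hπ y
    exact ⟨q z, hφ z⟩
  have hker : ∀ y, y ∈ (RingHom.ker q.toRingHom).restrictScalars k ↔ π y = 0 := by
    intro y
    have h1 : y ∈ (RingHom.ker q.toRingHom).restrictScalars k ↔ q y = 0 := Iff.rfl
    rw [h1, ← hφ]
    exact ⟨fun h => by rw [h, map_zero], fun h => hinj (by rw [h, map_zero])⟩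
  refine ⟨⟨?_, ?_, ?_⟩, ⟨(AlgEquiv.ofBijective φ ⟨hinj, hsur⟩).symm⟩⟩
  · intro y hy a
    rw [hker] at hy
    rw [hker, hker, map_mul, map_mul, hy]
    simp
  · intro y hy
    exact had.le y ((hker y).1 hy)
  · obtain ⟨N, hN⟩ := had.nil
    exact ⟨N, fun y hy => (hker y).2 (hN y hy)⟩

theorem core_of {V E A : Type} [Fintype V] [DecidableEq V] [Ring A] {s t : E → V} {e : V → A}
    {x : E → A} {σ : E → E} {L : E → ℕ} (h : PathFam s t e x) (hcomb : Comb s t σ L)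
    (hz' : ∀ a b, t a = s b → b ≠ σ a → x a * x b = 0)
    (hsoc : ∀ a b, s a = s b → W s σ e x a (L a) = W s σ e x b (L b))
    (hend : ∀ a, (∃ b, b ≠ a ∧ s b = s a) ∨ (∃ b, b ≠ σ a ∧ s b = t a) ∨
      W s σ e x a (L a) * x a = 0) : Core s e x σ L := by
  have hz : ∀ a b, b ≠ σ a → x a * x b = 0 := by
    intro a b hb
    by_cases hab : t a = s b
    · exact hz' a b hab hb
    · exact h.x_x a b hab
  have hL0 : ∀ a, L a ≠ 0 := fun a => by have := hcomb.two a; omega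
  refine ⟨hz, hsoc, ?_⟩
  intro a c
  by_cases hc : c = a
  · subst hc
    rcases hend c with ⟨b, hb, hs⟩ | ⟨b, hb, hs⟩ | h0
    · rw [hsoc c b hs.symm]
      exact W_mul_x hz b c _ (hL0 b) (by rw [hcomb.per]; exact hb.symm)
    · have h1 : W s σ e x c (L c) * x c = W s σ e x c (L c + 1) := by
        rw [W, hcomb.per]
      obtain ⟨n, hn⟩ := Nat.exists_eq_succ_of_ne_zero (hL0 b)
      obtain ⟨y, hy⟩ := W_head (σ := σ) h b n
      rw [h1, ← W_cons h hcomb.st, ← hcomb.Lσ c, hsoc (σ c) b (by rw [hs, hcomb.st]), hn,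
        Nat.succ_eq_add_one, hy, ← mul_assoc, hz _ _ hb, zero_mul]
    · exact h0
  · exact W_mul_x hz a c _ (hL0 a) (by rw [hcomb.per]; exact hc)

theorem per_dvd {E : Type} {σ : E → E} {a : E} (n m : ℕ) (hn0 : n ≠ 0) (hn : σ^[n] a = a)
    (hj : ∀ j < n, j ≠ 0 → σ^[j] a ≠ a) (hm : σ^[m] a = a) : n ∣ m := by
  have h1 : Function.IsPeriodicPt σ (m % n) a := Function.IsPeriodicPt.mod hm hn
  by_contra hnd
  exact hj _ (Nat.mod_lt _ (by omega)) (fun h0 => hnd (Nat.dvd_of_mod_eq_zero h0)) h1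

section Pow
variable {V E A : Type} [Fintype V] [DecidableEq V] [Ring A] {s t : E → V} {e : V → A} {x : E → A}
  {σ : E → E}

theorem W_pow1 (h : PathFam s t e x) (hσ : ∀ a, t a = s (σ a)) (a : E) (p : ℕ)
    (ha : σ a = a) (hp : 1 ≤ p) : W s σ e x a p = x a ^ p := by
  have := W_pow (σ := σ) h hσ a 1 p ha hp
  rwa [one_mul, W_one h] at this

theorem W_pow2 (h : PathFam s t e x) (hσ : ∀ a, t a = s (σ a)) (a b : E) (p : ℕ)
    (ha : σ a = b) (hb : σ b = a) (hp : 1 ≤ p) : W s σ e x a (2 * p) = (x a * x b) ^ p := by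
  subst ha
  rw [W_pow (σ := σ) h hσ a 2 p hb hp, W, W_one h]; rfl

theorem W_pow3 (h : PathFam s t e x) (hσ : ∀ a, t a = s (σ a)) (a b c : E) (p : ℕ)
    (ha : σ a = b) (hb : σ b = c) (hc : σ c = a) (hp : 1 ≤ p) :
    W s σ e x a (3 * p) = (x a * x b * x c) ^ p := by
  subst ha; subst hb
  rw [W_pow (σ := σ) h hσ a 3 p hc hp, W, W, W_one h]; rfl

theorem W_pow4 (h : PathFam s t e x) (hσ : ∀ a, t a = s (σ a)) (a b c d : E) (p : ℕ)
    (ha : σ a = b) (hb : σ b = c) (hc : σ c = d) (hd : σ d = a) (hp : 1 ≤ p) :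
    W s σ e x a (4 * p) = (x a * x b * x c * x d) ^ p := by
  subst ha; subst hb; subst hc
  rw [W_pow (σ := σ) h hσ a 4 p hd hp, W, W, W, W_one h]; rfl

end Pow

section Cases
variable {k A : Type} [Field k] [Ring A] [Algebra k A] {e : Fin 2 → A}

theorem case1 {x : Fin 2 → A} {L : Fin 2 → ℕ}
    (h : Full k src1 tgt1 e x ![1, 0] L) :
    ∃ m : ℕ, 1 ≤ m ∧ RelsAdmissible k src1 tgt1 (rels1 k m) ∧
      Nonempty (A ≃ₐ[k] PresAlg k (Fin 2) (Fin 2) src1 tgt1 (rels1 k m)) := by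
  have hc := h.comb
  obtain ⟨m, hm⟩ := per_dvd 2 (L 0) (by decide) (by decide) (by decide) (hc.per 0)
  have h1 : L 1 = 2 * m := by rw [← hm]; exact hc.Lσ 0
  have hm1 : 1 ≤ m := by have := hc.two 0; omega
  refine ⟨m, hm1, finish h (by decide) _ ?_⟩
  intro C _ _ e x hf
  have w0 := W_pow2 hf hc.st 0 1 m rfl rfl hm1
  have w1 := W_pow2 hf hc.st 1 0 m rfl rfl hm1
  rw [← hm] at w0
  rw [← h1] at w1
  simp only [rels1, Set.mem_insert_iff, Set.mem_singleton_iff, forall_eq_or_imp, forall_eq,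
    map_mul, map_pow, fa2, FreeAlgebra.lift_ι_apply, genMap]
  rw [← w0, ← w1]
  constructor
  · rintro ⟨r1, r2⟩
    apply core_of hf hc
    · intro a b hab hb
      fin_cases a <;> fin_cases b <;> first | exact absurd hab (by decide) | exact absurd rfl hb
    · intro a b hab
      fin_cases a <;> fin_cases b <;> first | rfl | exact absurd hab (by decide)
    · intro a
      right; right
      fin_cases a <;> assumption
  · intro hco
    exact ⟨hco.fin _ _, hco.fin _ _⟩

theorem case2a {x : Fin 3 → A} {L : Fin 3 → ℕ}
    (h : Full k src2 tgt2 e x ![1, 0, 2] L) :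
    ∃ p q : ℕ, 1 ≤ p ∧ 1 ≤ q ∧ RelsAdmissible k src2 tgt2 (rels2a k p q) ∧
      Nonempty (A ≃ₐ[k] PresAlg k (Fin 2) (Fin 3) src2 tgt2 (rels2a k p q)) := by
  have hc := h.comb
  obtain ⟨q, hq⟩ := per_dvd 2 (L 0) (by decide) (by decide) (by decide) (hc.per 0)
  have hq1 : 1 ≤ q := by have := hc.two 0; omega
  have hp1 : 1 ≤ L 2 := by have := hc.two 2; omega
  refine ⟨L 2, q, hp1, hq1, finish h (by decide) _ ?_⟩
  intro C _ _ e x hf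
  have w0 := W_pow2 hf hc.st 0 1 q rfl rfl hq1
  have w2 := W_pow1 hf hc.st 2 (L 2) rfl hp1
  rw [← hq] at w0
  simp only [rels2a, Set.mem_insert_iff, Set.mem_singleton_iff, forall_eq_or_imp, forall_eq,
    map_sub, map_mul, map_pow, fa2, FreeAlgebra.lift_ι_apply, genMap, sub_eq_zero]
  rw [← w0, ← w2]
  constructor
  · rintro ⟨r1, r2, r3⟩
    have r3' := r3.symm
    apply core_of hf hc
    · intro a b hab hb
      fin_cases a <;> fin_cases b <;>
        first | assumption | exact absurd hab (by decide) | exact absurd rfl hb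
    · intro a b hab
      fin_cases a <;> fin_cases b <;> first | rfl | assumption | exact absurd hab (by decide)
    · intro a
      rw [← or_assoc]
      left
      revert a
      decide
  · intro hco
    exact ⟨hco.zero _ _ (by decide), hco.zero _ _ (by decide), hco.soc _ _ (by decide)⟩

theorem case2b {x : Fin 3 → A} {L : Fin 3 → ℕ}
    (h : Full k src2 tgt2 e x ![1, 2, 0] L) :
    ∃ m : ℕ, 1 ≤ m ∧ RelsAdmissible k src2 tgt2 (rels2b k m) ∧
      Nonempty (A ≃ₐ[k] PresAlg k (Fin 2) (Fin 3) src2 tgt2 (rels2b k m)) := by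
  have hc := h.comb
  obtain ⟨m, hm⟩ := per_dvd 3 (L 0) (by decide) (by decide) (by decide) (hc.per 0)
  have h2 : L 2 = 3 * m := by rw [← hm]; exact (hc.Lσ 2).symm
  have hm1 : 1 ≤ m := by have := hc.two 0; omega
  refine ⟨m, hm1, finish h (by decide) _ ?_⟩
  intro C _ _ e x hf
  have w0 := W_pow3 hf hc.st 0 1 2 m rfl rfl rfl hm1
  have w2 := W_pow3 hf hc.st 2 0 1 m rfl rfl rfl hm1
  rw [← hm] at w0
  rw [← h2] at w2
  simp only [rels2b, Set.mem_insert_iff, Set.mem_singleton_iff, forall_eq_or_imp, forall_eq,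
    map_sub, map_mul, map_pow, fa2, FreeAlgebra.lift_ι_apply, genMap, sub_eq_zero]
  rw [← w0, ← w2]
  constructor
  · rintro ⟨r1, r2, r3⟩
    have r3' := r3.symm
    apply core_of hf hc
    · intro a b hab hb
      fin_cases a <;> fin_cases b <;>
        first | assumption | exact absurd hab (by decide) | exact absurd rfl hb
    · intro a b hab
      fin_cases a <;> fin_cases b <;> first | rfl | assumption | exact absurd hab (by decide)
    · intro a
      rw [← or_assoc]
      left
      revert a
      decide
  · intro hco
    exact ⟨hco.zero _ _ (by decide), hco.zero _ _ (by decide), hco.soc _ _ (by decide)⟩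

theorem case3a {x : Fin 4 → A} {L : Fin 4 → ℕ}
    (h : Full k src3 tgt3 e x ![2, 3, 0, 1] L) :
    ∃ p q : ℕ, 1 ≤ p ∧ 1 ≤ q ∧ RelsAdmissible k src3 tgt3 (rels3a k p q) ∧
      Nonempty (A ≃ₐ[k] PresAlg k (Fin 2) (Fin 4) src3 tgt3 (rels3a k p q)) := by
  have hc := h.comb
  obtain ⟨p, hp⟩ := per_dvd 2 (L 0) (by decide) (by decide) (by decide) (hc.per 0)
  obtain ⟨q, hq⟩ := per_dvd 2 (L 1) (by decide) (by decide) (by decide) (hc.per 1)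
  have h2 : L 2 = 2 * p := by rw [← hp]; exact hc.Lσ 0
  have h3 : L 3 = 2 * q := by rw [← hq]; exact hc.Lσ 1
  have hp1 : 1 ≤ p := by have := hc.two 0; omega
  have hq1 : 1 ≤ q := by have := hc.two 1; omega
  refine ⟨p, q, hp1, hq1, finish h (by decide) _ ?_⟩
  intro C _ _ e x hf
  have w0 := W_pow2 hf hc.st 0 2 p rfl rfl hp1
  have w1 := W_pow2 hf hc.st 1 3 q rfl rfl hq1
  have w2 := W_pow2 hf hc.st 2 0 p rfl rfl hp1
  have w3 := W_pow2 hf hc.st 3 1 q rfl rfl hq1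
  rw [← hp] at w0
  rw [← hq] at w1
  rw [← h2] at w2
  rw [← h3] at w3
  simp only [rels3a, Set.mem_insert_iff, Set.mem_singleton_iff, forall_eq_or_imp, forall_eq,
    map_sub, map_mul, map_pow, fa2, FreeAlgebra.lift_ι_apply, genMap, sub_eq_zero]
  rw [← w0, ← w1, ← w2, ← w3]
  constructor
  · rintro ⟨r1, r2, r3, r4, r5, r6⟩
    have r5' := r5.symm
    have r6' := r6.symm
    apply core_of hf hc
    · intro a b hab hb
      fin_cases a <;> fin_cases b <;>
        first | assumption | exact absurd hab (by decide) | exact absurd rfl hb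
    · intro a b hab
      fin_cases a <;> fin_cases b <;> first | rfl | assumption | exact absurd hab (by decide)
    · intro a
      left
      revert a
      decide
  · intro hco
    exact ⟨hco.zero _ _ (by decide), hco.zero _ _ (by decide), hco.zero _ _ (by decide),
      hco.zero _ _ (by decide), hco.soc _ _ (by decide), hco.soc _ _ (by decide)⟩

theorem case3b {x : Fin 4 → A} {L : Fin 4 → ℕ}
    (h : Full k src3 tgt3 e x ![2, 3, 1, 0] L) :
    ∃ m : ℕ, 1 ≤ m ∧ RelsAdmissible k src3 tgt3 (rels3b k m) ∧
      Nonempty (A ≃ₐ[k] PresAlg k (Fin 2) (Fin 4) src3 tgt3 (rels3b k m)) := by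
  have hc := h.comb
  obtain ⟨m, hm⟩ := per_dvd 4 (L 0) (by decide) (by decide) (by decide) (hc.per 0)
  have h2 : L 2 = 4 * m := by rw [← hm]; exact hc.Lσ 0
  have h1 : L 1 = 4 * m := by rw [← h2]; exact hc.Lσ 2
  have h3 : L 3 = 4 * m := by rw [← h1]; exact hc.Lσ 1
  have hm1 : 1 ≤ m := by have := hc.two 0; omega
  refine ⟨m, hm1, finish h (by decide) _ ?_⟩
  intro C _ _ e x hf
  have w0 := W_pow4 hf hc.st 0 2 1 3 m rfl rfl rfl rfl hm1
  have w1 := W_pow4 hf hc.st 1 3 0 2 m rfl rfl rfl rfl hm1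
  have w2 := W_pow4 hf hc.st 2 1 3 0 m rfl rfl rfl rfl hm1
  have w3 := W_pow4 hf hc.st 3 0 2 1 m rfl rfl rfl rfl hm1
  rw [← hm] at w0
  rw [← h1] at w1
  rw [← h2] at w2
  rw [← h3] at w3
  simp only [rels3b, Set.mem_insert_iff, Set.mem_singleton_iff, forall_eq_or_imp, forall_eq,
    map_sub, map_mul, map_pow, fa2, FreeAlgebra.lift_ι_apply, genMap, sub_eq_zero]
  rw [← w0, ← w1, ← w2, ← w3]
  constructor
  · rintro ⟨r1, r2, r3, r4, r5, r6⟩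
    have r5' := r5.symm
    have r6' := r6.symm
    apply core_of hf hc
    · intro a b hab hb
      fin_cases a <;> fin_cases b <;>
        first | assumption | exact absurd hab (by decide) | exact absurd rfl hb
    · intro a b hab
      fin_cases a <;> fin_cases b <;> first | rfl | assumption | exact absurd hab (by decide)
    · intro a
      left
      revert a
      decide
  · intro hco
    exact ⟨hco.zero _ _ (by decide), hco.zero _ _ (by decide), hco.zero _ _ (by decide),
      hco.zero _ _ (by decide), hco.soc _ _ (by decide), hco.soc _ _ (by decide)⟩

theorem case4a {x : Fin 4 → A} {L : Fin 4 → ℕ}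
    (h : Full k src4 tgt4 e x ![1, 0, 2, 3] L) :
    ∃ p q r : ℕ, 1 ≤ p ∧ 1 ≤ q ∧ 1 ≤ r ∧ RelsAdmissible k src4 tgt4 (rels4a k p q r) ∧
      Nonempty (A ≃ₐ[k] PresAlg k (Fin 2) (Fin 4) src4 tgt4 (rels4a k p q r)) := by
  have hc := h.comb
  obtain ⟨p, hp⟩ := per_dvd 2 (L 0) (by decide) (by decide) (by decide) (hc.per 0)
  have h1 : L 1 = 2 * p := by rw [← hp]; exact hc.Lσ 0
  have hp1 : 1 ≤ p := by have := hc.two 0; omega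
  have hq1 : 1 ≤ L 2 := by have := hc.two 2; omega
  have hr1 : 1 ≤ L 3 := by have := hc.two 3; omega
  refine ⟨p, L 2, L 3, hp1, hq1, hr1, finish h (by decide) _ ?_⟩
  intro C _ _ e x hf
  have w0 := W_pow2 hf hc.st 0 1 p rfl rfl hp1
  have w1 := W_pow2 hf hc.st 1 0 p rfl rfl hp1
  have w2 := W_pow1 hf hc.st 2 (L 2) rfl hq1
  have w3 := W_pow1 hf hc.st 3 (L 3) rfl hr1
  rw [← hp] at w0
  rw [← h1] at w1
  simp only [rels4a, Set.mem_insert_iff, Set.mem_singleton_iff, forall_eq_or_imp, forall_eq,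
    map_sub, map_mul, map_pow, fa2, FreeAlgebra.lift_ι_apply, genMap, sub_eq_zero]
  rw [← w0, ← w1, ← w2, ← w3]
  constructor
  · rintro ⟨r1, r2, r3, r4, r5, r6⟩
    have r5' := r5.symm
    have r6' := r6.symm
    apply core_of hf hc
    · intro a b hab hb
      fin_cases a <;> fin_cases b <;>
        first | assumption | exact absurd hab (by decide) | exact absurd rfl hb
    · intro a b hab
      fin_cases a <;> fin_cases b <;> first | rfl | assumption | exact absurd hab (by decide)
    · intro a
      left
      revert a
      decide
  · intro hco
    exact ⟨hco.zero _ _ (by decide), hco.zero _ _ (by decide), hco.zero _ _ (by decide),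
      hco.zero _ _ (by decide), hco.soc _ _ (by decide), hco.soc _ _ (by decide)⟩

theorem case4b {x : Fin 4 → A} {L : Fin 4 → ℕ}
    (h : Full k src4 tgt4 e x ![1, 2, 0, 3] L) :
    ∃ p q : ℕ, 1 ≤ p ∧ 1 ≤ q ∧ RelsAdmissible k src4 tgt4 (rels4b k p q) ∧
      Nonempty (A ≃ₐ[k] PresAlg k (Fin 2) (Fin 4) src4 tgt4 (rels4b k p q)) := by
  have hc := h.comb
  obtain ⟨p, hp⟩ := per_dvd 3 (L 0) (by decide) (by decide) (by decide) (hc.per 0)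
  have h1 : L 1 = 3 * p := by rw [← hp]; exact hc.Lσ 0
  have h2 : L 2 = 3 * p := by rw [← h1]; exact hc.Lσ 1
  have hp1 : 1 ≤ p := by have := hc.two 0; omega
  have hr1 : 1 ≤ L 3 := by have := hc.two 3; omega
  refine ⟨p, L 3, hp1, hr1, finish h (by decide) _ ?_⟩
  intro C _ _ e x hf
  have w0 := W_pow3 hf hc.st 0 1 2 p rfl rfl rfl hp1
  have w1 := W_pow3 hf hc.st 1 2 0 p rfl rfl rfl hp1
  have w2 := W_pow3 hf hc.st 2 0 1 p rfl rfl rfl hp1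
  have w3 := W_pow1 hf hc.st 3 (L 3) rfl hr1
  rw [← hp] at w0
  rw [← h1] at w1
  rw [← h2] at w2
  simp only [rels4b, Set.mem_insert_iff, Set.mem_singleton_iff, forall_eq_or_imp, forall_eq,
    map_sub, map_mul, map_pow, fa2, FreeAlgebra.lift_ι_apply, genMap, sub_eq_zero]
  rw [← w0, ← w1, ← w2, ← w3]
  constructor
  · rintro ⟨r1, r2, r3, r4, r5, r6⟩
    have r5' := r5.symm
    have r6' := r6.symm
    apply core_of hf hc
    · intro a b hab hb
      fin_cases a <;> fin_cases b <;>
        first | assumption | exact absurd hab (by decide) | exact absurd rfl hb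
    · intro a b hab
      fin_cases a <;> fin_cases b <;> first | rfl | assumption | exact absurd hab (by decide)
    · intro a
      left
      revert a
      decide
  · intro hco
    exact ⟨hco.zero _ _ (by decide), hco.zero _ _ (by decide), hco.zero _ _ (by decide),
      hco.zero _ _ (by decide), hco.soc _ _ (by decide), hco.soc _ _ (by decide)⟩

theorem case4c {x : Fin 4 → A} {L : Fin 4 → ℕ}
    (h : Full k src4 tgt4 e x ![3, 2, 0, 1] L) :
    ∃ m : ℕ, 1 ≤ m ∧ RelsAdmissible k src4 tgt4 (rels4c k m) ∧
      Nonempty (A ≃ₐ[k] PresAlg k (Fin 2) (Fin 4) src4 tgt4 (rels4c k m)) := by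
  have hc := h.comb
  obtain ⟨m, hm⟩ := per_dvd 4 (L 0) (by decide) (by decide) (by decide) (hc.per 0)
  have h3 : L 3 = 4 * m := by rw [← hm]; exact hc.Lσ 0
  have h1 : L 1 = 4 * m := by rw [← h3]; exact hc.Lσ 3
  have h2 : L 2 = 4 * m := by rw [← h1]; exact hc.Lσ 1
  have hm1 : 1 ≤ m := by have := hc.two 0; omega
  refine ⟨m, hm1, finish h (by decide) _ ?_⟩
  intro C _ _ e x hf
  have w0 := W_pow4 hf hc.st 0 3 1 2 m rfl rfl rfl rfl hm1
  have w1 := W_pow4 hf hc.st 1 2 0 3 m rfl rfl rfl rfl hm1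
  have w2 := W_pow4 hf hc.st 2 0 3 1 m rfl rfl rfl rfl hm1
  have w3 := W_pow4 hf hc.st 3 1 2 0 m rfl rfl rfl rfl hm1
  rw [← hm] at w0
  rw [← h1] at w1
  rw [← h2] at w2
  rw [← h3] at w3
  simp only [rels4c, Set.mem_insert_iff, Set.mem_singleton_iff, forall_eq_or_imp, forall_eq,
    map_sub, map_mul, map_pow, fa2, FreeAlgebra.lift_ι_apply, genMap, sub_eq_zero]
  rw [← w0, ← w1, ← w2, ← w3]
  constructor
  · rintro ⟨r1, r2, r3, r4, r5, r6⟩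
    have r5' := r5.symm
    have r6' := r6.symm
    apply core_of hf hc
    · intro a b hab hb
      fin_cases a <;> fin_cases b <;>
        first | assumption | exact absurd hab (by decide) | exact absurd rfl hb
    · intro a b hab
      fin_cases a <;> fin_cases b <;> first | rfl | assumption | exact absurd hab (by decide)
    · intro a
      left
      revert a
      decide
  · intro hco
    exact ⟨hco.zero _ _ (by decide), hco.zero _ _ (by decide), hco.zero _ _ (by decide),
      hco.zero _ _ (by decide), hco.soc _ _ (by decide), hco.soc _ _ (by decide)⟩

end Cases

/-- The conclusion of the classification. -/
def Concl (k A : Type) [Field k] [Ring A] [Algebra k A] : Prop :=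
    (∃ m : ℕ, 1 ≤ m ∧ RelsAdmissible k src1 tgt1 (rels1 k m) ∧
      Nonempty (A ≃ₐ[k] PresAlg k (Fin 2) (Fin 2) src1 tgt1 (rels1 k m))) ∨
    (∃ p q : ℕ, 1 ≤ p ∧ 1 ≤ q ∧ RelsAdmissible k src2 tgt2 (rels2a k p q) ∧
      Nonempty (A ≃ₐ[k] PresAlg k (Fin 2) (Fin 3) src2 tgt2 (rels2a k p q))) ∨
    (∃ m : ℕ, 1 ≤ m ∧ RelsAdmissible k src2 tgt2 (rels2b k m) ∧
      Nonempty (A ≃ₐ[k] PresAlg k (Fin 2) (Fin 3) src2 tgt2 (rels2b k m))) ∨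
    (∃ p q : ℕ, 1 ≤ p ∧ 1 ≤ q ∧ RelsAdmissible k src3 tgt3 (rels3a k p q) ∧
      Nonempty (A ≃ₐ[k] PresAlg k (Fin 2) (Fin 4) src3 tgt3 (rels3a k p q))) ∨
    (∃ m : ℕ, 1 ≤ m ∧ RelsAdmissible k src3 tgt3 (rels3b k m) ∧
      Nonempty (A ≃ₐ[k] PresAlg k (Fin 2) (Fin 4) src3 tgt3 (rels3b k m))) ∨
    (∃ p q r : ℕ, 1 ≤ p ∧ 1 ≤ q ∧ 1 ≤ r ∧ RelsAdmissible k src4 tgt4 (rels4a k p q r) ∧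
      Nonempty (A ≃ₐ[k] PresAlg k (Fin 2) (Fin 4) src4 tgt4 (rels4a k p q r))) ∨
    (∃ p q : ℕ, 1 ≤ p ∧ 1 ≤ q ∧ RelsAdmissible k src4 tgt4 (rels4b k p q) ∧
      Nonempty (A ≃ₐ[k] PresAlg k (Fin 2) (Fin 4) src4 tgt4 (rels4b k p q))) ∨
    (∃ m : ℕ, 1 ≤ m ∧ RelsAdmissible k src4 tgt4 (rels4c k m) ∧
      Nonempty (A ≃ₐ[k] PresAlg k (Fin 2) (Fin 4) src4 tgt4 (rels4c k m)))

section Enum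
variable {k A : Type} [Field k] [Ring A] [Algebra k A] {e : Fin 2 → A}

theorem quiver1 {x : Fin 2 → A} {σ : Fin 2 → Fin 2} {L : Fin 2 → ℕ}
    (h : Full k src1 tgt1 e x σ L) : Concl k A := by
  have hσ : σ = ![1, 0] := by
    have h0 := h.comb.st 0
    have h1 := h.comb.st 1
    funext a
    revert h0 h1
    generalize σ 0 = a0
    have key : ∀ a0 a1 : Fin 2, tgt1 0 = src1 a0 → tgt1 1 = src1 a1 → a0 = 1 ∧ a1 = 0 := by decide
    intro h0 h1
    have h0' := (key _ _ (h.comb.st 0) h1).1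
    have h1' := (key _ _ (h.comb.st 0) h1).2
    fin_cases a
    · exact h0'
    · exact h1'
  subst hσ
  exact Or.inl (case1 h)

theorem quiver2 {x : Fin 3 → A} {σ : Fin 3 → Fin 3} {L : Fin 3 → ℕ}
    (h : Full k src2 tgt2 e x σ L) : Concl k A := by
  have key : ∀ a0 a1 a2 : Fin 3, tgt2 0 = src2 a0 → tgt2 1 = src2 a1 → tgt2 2 = src2 a2 →
      a1 ≠ a2 → ![a0, a1, a2] = ![1, 0, 2] ∨ ![a0, a1, a2] = ![1, 2, 0] := by decide
  have hσ : σ = ![σ 0, σ 1, σ 2] := by funext a; fin_cases a <;> rfl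
  have := key _ _ _ (h.comb.st 0) (h.comb.st 1) (h.comb.st 2)
    (h.comb.inj.ne (by decide))
  rw [← hσ] at this
  rcases this with h0 | h0
  · rw [h0] at h
    exact Or.inr (Or.inl (case2a h))
  · rw [h0] at h
    exact Or.inr (Or.inr (Or.inl (case2b h)))

theorem quiver3 {x : Fin 4 → A} {σ : Fin 4 → Fin 4} {L : Fin 4 → ℕ}
    (h : Full k src3 tgt3 e x σ L) : Concl k A := by
  have key : ∀ a0 a1 a2 a3 : Fin 4, tgt3 0 = src3 a0 → tgt3 1 = src3 a1 → tgt3 2 = src3 a2 →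
      tgt3 3 = src3 a3 → a0 ≠ a1 → a2 ≠ a3 →
      ![a0, a1, a2, a3] = ![2, 3, 0, 1] ∨ ![a0, a1, a2, a3] = ![2, 3, 1, 0] ∨
      ![a0, a1, a2, a3] = ![3, 2, 1, 0] ∨ ![a0, a1, a2, a3] = ![3, 2, 0, 1] := by decide
  have hσ : σ = ![σ 0, σ 1, σ 2, σ 3] := by funext a; fin_cases a <;> rfl
  have := key _ _ _ _ (h.comb.st 0) (h.comb.st 1) (h.comb.st 2) (h.comb.st 3)
    (h.comb.inj.ne (by decide)) (h.comb.inj.ne (by decide))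
  rw [← hσ] at this
  rcases this with h0 | h0 | h0 | h0
  · rw [h0] at h
    exact Or.inr (Or.inr (Or.inr (Or.inl (case3a h))))
  · rw [h0] at h
    exact Or.inr (Or.inr (Or.inr (Or.inr (Or.inl (case3b h)))))
  · rw [h0] at h
    exact Or.inr (Or.inr (Or.inr (Or.inl (case3a (h.relabel (s' := src3) (t' := tgt3)
      (Equiv.refl _) (Equiv.swap 2 3) ![2, 3, 0, 1] (by decide) (by decide) (by decide))))))
  · rw [h0] at h
    exact Or.inr (Or.inr (Or.inr (Or.inr (Or.inl (case3b (h.relabel (s' := src3) (t' := tgt3)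
      (Equiv.refl _) (Equiv.swap 2 3) ![2, 3, 1, 0] (by decide) (by decide) (by decide)))))))

theorem quiver4 {x : Fin 4 → A} {σ : Fin 4 → Fin 4} {L : Fin 4 → ℕ}
    (h : Full k src4 tgt4 e x σ L) : Concl k A := by
  have key : ∀ a0 a1 a2 a3 : Fin 4, tgt4 0 = src4 a0 → tgt4 1 = src4 a1 → tgt4 2 = src4 a2 →
      tgt4 3 = src4 a3 → a0 ≠ a3 → a1 ≠ a2 →
      ![a0, a1, a2, a3] = ![1, 0, 2, 3] ∨ ![a0, a1, a2, a3] = ![1, 2, 0, 3] ∨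
      ![a0, a1, a2, a3] = ![3, 0, 2, 1] ∨ ![a0, a1, a2, a3] = ![3, 2, 0, 1] := by decide
  have hσ : σ = ![σ 0, σ 1, σ 2, σ 3] := by funext a; fin_cases a <;> rfl
  have := key _ _ _ _ (h.comb.st 0) (h.comb.st 1) (h.comb.st 2) (h.comb.st 3)
    (h.comb.inj.ne (by decide)) (h.comb.inj.ne (by decide))
  rw [← hσ] at this
  rcases this with h0 | h0 | h0 | h0
  · rw [h0] at h
    exact Or.inr (Or.inr (Or.inr (Or.inr (Or.inr (Or.inl (case4a h))))))
  · rw [h0] at h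
    exact Or.inr (Or.inr (Or.inr (Or.inr (Or.inr (Or.inr (Or.inl (case4b h)))))))
  · rw [h0] at h
    exact Or.inr (Or.inr (Or.inr (Or.inr (Or.inr (Or.inr (Or.inl
      (case4b (h.relabel (s' := src4) (t' := tgt4)
      (Equiv.swap 0 1) ((Equiv.swap 0 1).trans (Equiv.swap 2 3)) ![1, 2, 0, 3]
      (by decide) (by decide) (by decide)))))))))
  · rw [h0] at h
    exact Or.inr (Or.inr (Or.inr (Or.inr (Or.inr (Or.inr (Or.inr (case4c h)))))))

theorem exists_tau (v w : Fin 2) (h : v ≠ w) : ∃ τ : Fin 2 ≃ Fin 2, τ 0 = v ∧ τ 1 = w := by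
  have : (v = 0 ∧ w = 1) ∨ (v = 1 ∧ w = 0) := by revert v w; decide
  rcases this with ⟨rfl, rfl⟩ | ⟨rfl, rfl⟩
  · exact ⟨Equiv.refl _, rfl, rfl⟩
  · exact ⟨Equiv.swap 0 1, by decide, by decide⟩

theorem fin2_or {v w : Fin 2} (h : v ≠ w) (u : Fin 2) : u = v ∨ u = w := by
  revert v w u; decide

variable {E : Type} {s t : E → Fin 2} {x : E → A} {σ : E → E} {L : E → ℕ}

theorem toStd (h : Full k s t e x σ L) {n : ℕ} (f : Fin n → E) (hf : Function.Bijective f)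
    (s' t' : Fin n → Fin 2) (τ : Fin 2 ≃ Fin 2) (hs : ∀ a, s (f a) = τ (s' a))
    (ht : ∀ a, t (f a) = τ (t' a)) :
    ∃ e' x' σ' L', Full (A := A) k s' t' e' x' σ' L' := by
  let ε := Equiv.ofBijective f hf
  exact ⟨_, _, _, _, h.relabel (s' := s') (t' := t') τ ε (fun a => ε.symm (σ (ε a))) hs ht
    (fun a => by simp)⟩

theorem red1 (h : Full k s t e x σ L) (α β : E) (hne : s α ≠ t α) (hs : s β = t α)
    (ht : t β = s α) (hall : ∀ a, a = α ∨ a = β) : Concl k A := by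
  obtain ⟨τ, h0, h1⟩ := exists_tau _ _ hne
  have hab : α ≠ β := by rintro rfl; exact hne hs
  refine (fun hE => ?_ : (∃ e' x' σ' L', Full (A := A) k src1 tgt1 e' x' σ' L') → Concl k A)
    (toStd h ![α, β] ⟨?_, ?_⟩ src1 tgt1 τ ?_ ?_)
  · obtain ⟨e', x', σ', L', hF⟩ := hE
    exact quiver1 hF
  · intro i j hij
    fin_cases i <;> fin_cases j <;> simp_all
  · intro a
    rcases hall a with rfl | rfl
    · exact ⟨0, rfl⟩
    · exact ⟨1, rfl⟩
  · intro a
    fin_cases a <;> simp [src1, *]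
  · intro a
    fin_cases a <;> simp [tgt1, *]

theorem red2 (h : Full k s t e x σ L) (α β γ : E) (hne : s α ≠ t α) (hs : s β = t α)
    (ht : t β = s α) (hγ : s γ = s α) (hγα : γ ≠ α) (h1 : ∀ a, s a = s α → a = α ∨ a = γ)
    (h2 : ∀ a, s a = t α → a = β) : Concl k A := by
  have hst := h.comb.st
  have htγ : t γ = s α := by
    rcases fin2_or hne (t γ) with h0 | h0
    · exact h0
    · have e1 := h2 (σ γ) (by rw [← hst, h0])
      have e2 := h2 (σ α) (by rw [← hst])
      exact absurd (h.comb.inj (e1.trans e2.symm)) hγα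
  obtain ⟨τ, g0, g1⟩ := exists_tau _ _ hne
  have hab : α ≠ β := by rintro rfl; exact hne hs
  have hgb : γ ≠ β := by rintro rfl; exact hne (hγ.symm.trans hs)
  refine (fun hE => ?_ : (∃ e' x' σ' L', Full (A := A) k src2 tgt2 e' x' σ' L') → Concl k A)
    (toStd h ![α, β, γ] ⟨?_, ?_⟩ src2 tgt2 τ ?_ ?_)
  · obtain ⟨e', x', σ', L', hF⟩ := hE
    exact quiver2 hF
  · have := hab.symm
    have := hγα.symm
    have := hgb.symm
    intro i j hij
    fin_cases i <;> fin_cases j <;> first | rfl | exact absurd hij (by assumption)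
  · intro a
    rcases fin2_or hne (s a) with h0 | h0
    · rcases h1 a h0 with rfl | rfl
      · exact ⟨0, rfl⟩
      · exact ⟨2, rfl⟩
    · rw [h2 a h0]
      exact ⟨1, rfl⟩
  · intro a
    clear hst h1 h2
    fin_cases a <;> simp [src2, *]
  · intro a
    clear hst h1 h2
    fin_cases a <;> simp [tgt2, *]

theorem red34 (h : Full k s t e x σ L) (α β γ δ : E) (hne : s α ≠ t α) (hs : s β = t α)
    (ht : t β = s α) (hγ : s γ = s α) (hγα : γ ≠ α) (h1 : ∀ a, s a = s α → a = α ∨ a = γ)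
    (hδ : s δ = t α) (hδβ : δ ≠ β)
    (h2 : ∀ a, s a = t α → a = β ∨ a = δ) : Concl k A := by
  have hst := h.comb.st
  have inj := h.comb.inj
  obtain ⟨τ, g0, g1⟩ := exists_tau _ _ hne
  have hab : α ≠ β := by rintro rfl; exact hne hs
  have had : α ≠ δ := by rintro rfl; exact hne hδ
  have hgb : γ ≠ β := by rintro rfl; exact hne (hγ.symm.trans hs)
  have hgd : γ ≠ δ := by rintro rfl; exact hne (hγ.symm.trans hδ)
  have hab' := hab.symm
  have had' := had.symm
  have hgb' := hgb.symm
  have hgd' := hgd.symm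
  have hγα' := hγα.symm
  have hδβ' := hδβ.symm
  have hall : ∀ a, a = α ∨ a = β ∨ a = γ ∨ a = δ := by
    intro a
    rcases fin2_or hne (s a) with h0 | h0
    · have := h1 a h0
      tauto
    · have := h2 a h0
      tauto
  have pig : ∀ (a b c p q : E), a ≠ b → a ≠ c → b ≠ c → (σ a = p ∨ σ a = q) →
      (σ b = p ∨ σ b = q) → (σ c = p ∨ σ c = q) → False := by
    intro a b c p q hab hac hbc ha hb hc
    have n1 := inj.ne hab
    have n2 := inj.ne hac
    have n3 := inj.ne hbc
    rcases ha with ha | ha <;> rcases hb with hb | hb <;> rcases hc with hc | hc <;> simp_all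
  rcases fin2_or hne (t γ) with h0 | h0
  · have h3 : t δ = t α := by
      rcases fin2_or hne (t δ) with h3 | h3
      · exact (pig β γ δ α γ hgb' hδβ' hgd (h1 _ (by rw [← hst, ht]))
          (h1 _ (by rw [← hst, h0])) (h1 _ (by rw [← hst, h3]))).elim
      · exact h3
    refine (fun hE => ?_ : (∃ e' x' σ' L', Full (A := A) k src4 tgt4 e' x' σ' L') → Concl k A)
      (toStd h ![α, β, γ, δ] ⟨?_, ?_⟩ src4 tgt4 τ ?_ ?_)
    · obtain ⟨e', x', σ', L', hF⟩ := hE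
      exact quiver4 hF
    · intro i j hij
      fin_cases i <;> fin_cases j <;> first | rfl | exact absurd hij (by assumption)
    · intro a
      rcases hall a with rfl | rfl | rfl | rfl
      · exact ⟨0, rfl⟩
      · exact ⟨1, rfl⟩
      · exact ⟨2, rfl⟩
      · exact ⟨3, rfl⟩
    · intro a
      clear hst h1 h2
      fin_cases a <;> simp [src4, *]
    · intro a
      clear hst h1 h2
      fin_cases a <;> simp [tgt4, *]
  · have h3 : t δ = s α := by
      rcases fin2_or hne (t δ) with h3 | h3
      · exact h3
      · exact (pig α γ δ β δ hγα' had hgd (h2 _ (by rw [← hst]))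
          (h2 _ (by rw [← hst, h0])) (h2 _ (by rw [← hst, h3]))).elim
    refine (fun hE => ?_ : (∃ e' x' σ' L', Full (A := A) k src3 tgt3 e' x' σ' L') → Concl k A)
      (toStd h ![α, γ, β, δ] ⟨?_, ?_⟩ src3 tgt3 τ ?_ ?_)
    · obtain ⟨e', x', σ', L', hF⟩ := hE
      exact quiver3 hF
    · intro i j hij
      fin_cases i <;> fin_cases j <;> first | rfl | exact absurd hij (by assumption)
    · intro a
      rcases hall a with rfl | rfl | rfl | rfl
      · exact ⟨0, rfl⟩
      · exact ⟨2, rfl⟩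
      · exact ⟨1, rfl⟩
      · exact ⟨3, rfl⟩
    · intro a
      clear hst h1 h2
      fin_cases a <;> simp [src3, *]
    · intro a
      clear hst h1 h2
      fin_cases a <;> simp [tgt3, *]

theorem enum [Fintype E] [DecidableEq E] (h : Full k s t e x σ L) (hne : ∃ c, s c ≠ t c)
    (hcard : ∀ v : Fin 2, (Finset.univ.filter fun e : E => s e = v).card ≤ 2) : Concl k A := by
  obtain ⟨α, hα⟩ := hne
  have hst := h.comb.st
  have hβ : ∃ β, s β = t α ∧ t β = s α := by
    by_contra hcon
    have hcon' : ∀ β, s β = t α → t β = t α := by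
      intro β hb
      rcases fin2_or hα (t β) with h0 | h0
      · exact (hcon ⟨β, hb, h0⟩).elim
      · exact h0
    have hit : ∀ n, s (σ^[n + 1] α) = t α := by
      intro n
      induction n with
      | zero => rw [hst]; rfl
      | succ n ih => rw [Function.iterate_succ_apply', ← hst, hcon' _ ih]
    have h2 := h.comb.two α
    have := hit (L α - 1)
    rw [show L α - 1 + 1 = L α by omega, h.comb.per] at this
    exact hα this
  obtain ⟨β, hs, ht⟩ := hβ
  have out : ∀ a, (∀ b, s b = s a → b = a) ∨
      ∃ c, s c = s a ∧ c ≠ a ∧ ∀ b, s b = s a → b = a ∨ b = c := by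
    intro a
    by_cases hu : ∀ b, s b = s a → b = a
    · exact Or.inl hu
    · push Not at hu
      obtain ⟨c, hc, hca⟩ := hu
      refine Or.inr ⟨c, hc, hca, ?_⟩
      intro b hb
      by_contra hbb
      push Not at hbb
      have hsub : ({a, c, b} : Finset E) ⊆ Finset.univ.filter fun e : E => s e = s a := by
        intro y hy
        simp only [Finset.mem_insert, Finset.mem_singleton] at hy
        rcases hy with rfl | rfl | rfl <;> simp [*]
      have h3 : ({a, c, b} : Finset E).card = 3 :=
        Finset.card_eq_three.2 ⟨a, c, b, hca.symm, hbb.1.symm, hbb.2.symm, rfl⟩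
      have := Finset.card_le_card hsub
      have := hcard (s a)
      omega
  rcases out α with h1 | ⟨γ, c1, c2, c3⟩
  · rcases out β with h2 | ⟨δ, d1, d2, d3⟩
    · refine red1 h α β hα hs ht ?_
      intro a
      rcases fin2_or hα (s a) with h0 | h0
      · exact Or.inl (h1 a h0)
      · exact Or.inr (h2 a (h0.trans hs.symm))
    · exact red2 h β α δ (by rw [hs, ht]; exact hα.symm) ht.symm hs.symm d1 d2 d3
        (fun a ha => h1 a (ha.trans ht))
  · rcases out β with h2 | ⟨δ, d1, d2, d3⟩
    · exact red2 h α β γ hα hs ht c1 c2 c3 (fun a ha => h2 a (ha.trans hs.symm))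
    · exact red34 h α β γ δ hα hs ht c1 c2 c3 (d1.trans hs) d2
        (fun a ha => d3 a (ha.trans hs.symm))

end Enum

theorem quot_eq_zero {k V E : Type} [Field k] [Fintype V] [DecidableEq V] (s t : E → V)
    (I : Submodule k (PathAlg k V E s t)) (hI : IsTwoSidedSub I) (y : PathAlg k V E s t)
    (hy : pathQuotMap k s t I y = 0) : y ∈ I := by
  let J : TwoSidedIdeal (PathAlg k V E s t) := TwoSidedIdeal.mk' (I : Set _) I.zero_mem
    I.add_mem I.neg_mem (fun {a b} hb => (hI b hb a).1) (fun {a b} ha => (hI a ha b).2)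
  have hJ : ∀ z, z ∈ J ↔ z ∈ I := fun z => TwoSidedIdeal.mem_mk' ..
  let f : RingQuot (fun a b : PathAlg k V E s t => a - b ∈ I) →+* J.ringCon.Quotient :=
    RingQuot.lift ⟨J.ringCon.mk', by
      intro a b hab
      refine (RingCon.eq _).2 ?_
      rw [TwoSidedIdeal.rel_iff, hJ]
      exact hab⟩
  have h1 : f (pathQuotMap k s t I y) = J.ringCon.mk' y := by
    simp only [f, pathQuotMap, RingQuot.mkAlgHom]
    exact RingQuot.lift_mkRingHom_apply ..
  rw [hy, map_zero] at h1
  have h2 : J.ringCon y 0 := (RingCon.eq _).1 h1.symm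
  rw [TwoSidedIdeal.rel_iff, hJ, sub_zero] at h2
  exact h2

end Helpers

/-- A connected two-point symmetric special biserial algebra `A = kQ/I`
(`I` admissible) is isomorphic to one of the listed quotients of path algebras, for suitable
positive integers for which the listed relations generate an admissible ideal. -/
theorem statement16 (k : Type) [Field k] [IsAlgClosed k]
    (mE : ℕ) (s t : Fin mE → Fin 2) (hconn : QConnected s t)
    (I : Submodule k (PathAlg k (Fin 2) (Fin mE) s t)) (hI : IsAdmissible k s t I)
    (hsym : IsSymmetricAlgebra' k (PathQuot k s t I))
    (hsb : SpecialBiserialPres k s t (A := PathQuot k s t I) (pathQuotMap k s t I)) :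
    (∃ m : ℕ, 1 ≤ m ∧ RelsAdmissible k src1 tgt1 (rels1 k m) ∧
      Nonempty (PathQuot k s t I ≃ₐ[k] PresAlg k (Fin 2) (Fin 2) src1 tgt1 (rels1 k m))) ∨
    (∃ p q : ℕ, 1 ≤ p ∧ 1 ≤ q ∧ RelsAdmissible k src2 tgt2 (rels2a k p q) ∧
      Nonempty (PathQuot k s t I ≃ₐ[k] PresAlg k (Fin 2) (Fin 3) src2 tgt2 (rels2a k p q))) ∨
    (∃ m : ℕ, 1 ≤ m ∧ RelsAdmissible k src2 tgt2 (rels2b k m) ∧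
      Nonempty (PathQuot k s t I ≃ₐ[k] PresAlg k (Fin 2) (Fin 3) src2 tgt2 (rels2b k m))) ∨
    (∃ p q : ℕ, 1 ≤ p ∧ 1 ≤ q ∧ RelsAdmissible k src3 tgt3 (rels3a k p q) ∧
      Nonempty (PathQuot k s t I ≃ₐ[k] PresAlg k (Fin 2) (Fin 4) src3 tgt3 (rels3a k p q))) ∨
    (∃ m : ℕ, 1 ≤ m ∧ RelsAdmissible k src3 tgt3 (rels3b k m) ∧
      Nonempty (PathQuot k s t I ≃ₐ[k] PresAlg k (Fin 2) (Fin 4) src3 tgt3 (rels3b k m))) ∨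
    (∃ p q r : ℕ, 1 ≤ p ∧ 1 ≤ q ∧ 1 ≤ r ∧ RelsAdmissible k src4 tgt4 (rels4a k p q r) ∧
      Nonempty (PathQuot k s t I ≃ₐ[k] PresAlg k (Fin 2) (Fin 4) src4 tgt4 (rels4a k p q r))) ∨
    (∃ p q : ℕ, 1 ≤ p ∧ 1 ≤ q ∧ RelsAdmissible k src4 tgt4 (rels4b k p q) ∧
      Nonempty (PathQuot k s t I ≃ₐ[k] PresAlg k (Fin 2) (Fin 4) src4 tgt4 (rels4b k p q))) ∨
    (∃ m : ℕ, 1 ≤ m ∧ RelsAdmissible k src4 tgt4 (rels4c k m) ∧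
      Nonempty (PathQuot k s t I ≃ₐ[k] PresAlg k (Fin 2) (Fin 4) src4 tgt4 (rels4c k m))) := by


  have hπ : Function.Surjective (pathQuotMap k s t I) := RingQuot.mkAlgHom_surjective k _
  have h0 : ∀ y ∈ I, pathQuotMap k s t I y = 0 := by
    intro y hy
    have := RingQuot.mkAlgHom_rel k (s := fun a b : PathAlg k (Fin 2) (Fin mE) s t => a - b ∈ I)
      (x := y) (y := 0) (by simpa using hy)
    rw [map_zero] at this
    exact this
  have had : Adm (A := PathQuot k s t I) (pathQuotMap k s t I) := by
    refine ⟨fun y hy => hI.2.1 (quot_eq_zero s t I hI.1 y hy), ?_⟩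
    obtain ⟨N, hN⟩ := hI.2.2
    exact ⟨N, fun y hy => h0 y (hN hy)⟩
  obtain ⟨c, σ, L, hc, hcomb, hcore, hne⟩ :=
    struct_lemma hconn _ hπ had hsym hsb.2.2.1 hsb.2.2.2
  have hF : Full k s t (fun v => pathQuotMap k s t I (pV k s t v))
      (fun a => c a • pathQuotMap k s t I (pA k s t a)) σ L :=
    ⟨transfer _ hπ had (Equiv.refl _) (Equiv.refl _) c hc (fun _ => rfl) (fun _ => rfl),
      hcomb, hcore, hne⟩
  exact enum hF (connected_arrow hconn) hsb.1

end
end QH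
end

section
/- Let A = kQ/I be a symmetric special biserial algebra with Q a connected quiver and I an admissible ideal. Suppose u = u₁u₂⋯u_r is a product of arrows of Q whose image in A is nonzero and which satisfies uδ = 0 in A for every arrow δ. Then: (1) δu = 0 in A for every arrow δ; (2) u is a cycle, i.e., the initial vertex of u₁ equals the terminal vertex of u_r; (3) if v = v₁v₂⋯v_s is another product of arrows, nonzero in A, with vδ = 0 in A for every arrow δ, and u₁ = v₁, then r = s and u_i = v_i for all i; (4) if v = v₁v₂⋯v_s is a product of arrows, nonzero in A, with vδ = 0 in A for every arrow δ, and the initial vertex of v₁ equals the initial vertex of u₁, then u = cv in A for some nonzero scalar c ∈ k; (5) if Tr : A → k is a k-linear map with Tr(ab) = Tr(ba) for all a, b and non-degenerate associated bilinear form, then Tr(u) ≠ 0. -/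
set_option linter.unusedSectionVars false

namespace QH
noncomputable section
/-- The image in `A = kQ/I` of the path `u = u₁ u₂ ⋯ u_r` given by a list of arrows. -/
def prodPath (k : Type) [CommRing k] {nV mE : ℕ} (s t : Fin mE → Fin nV)
    (I : Submodule k (PathAlg k (Fin nV) (Fin mE) s t)) (L : List (Fin mE)) :
    PathQuot k s t I :=
  (L.map fun e => pathQuotMap k s t I (pA k s t e)).prod

/-- The image in `A` of a vertex idempotent. -/
abbrev qV (k : Type) [CommRing k] {nV mE : ℕ} (s t : Fin mE → Fin nV)
    (I : Submodule k (PathAlg k (Fin nV) (Fin mE) s t)) (x : Fin nV) : PathQuot k s t I :=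
  pathQuotMap k s t I (pV k s t x)

/-- The image in `A` of an arrow. -/
abbrev qA (k : Type) [CommRing k] {nV mE : ℕ} (s t : Fin mE → Fin nV)
    (I : Submodule k (PathAlg k (Fin nV) (Fin mE) s t)) (x : Fin mE) : PathQuot k s t I :=
  pathQuotMap k s t I (pA k s t x)

lemma qV_mul (k : Type) [CommRing k] {nV mE : ℕ} (s t : Fin mE → Fin nV)
    (I : Submodule k (PathAlg k (Fin nV) (Fin mE) s t)) (x y : Fin nV) :
    qV k s t I x * qV k s t I y = if x = y then qV k s t I x else 0 := by
  have h := RingQuot.mkAlgHom_rel k (PathRel.vv (k := k) (s := s) (t := t) x y)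
  rw [map_mul] at h
  have h2 := congrArg (pathQuotMap k s t I) h
  rw [map_mul] at h2
  refine h2.trans ?_
  split_ifs
  · rfl
  · simp

lemma src_mul (k : Type) [CommRing k] {nV mE : ℕ} (s t : Fin mE → Fin nV)
    (I : Submodule k (PathAlg k (Fin nV) (Fin mE) s t)) (e : Fin mE) :
    qV k s t I (s e) * qA k s t I e = qA k s t I e := by
  have h := RingQuot.mkAlgHom_rel k (PathRel.src (k := k) (s := s) (t := t) e)
  rw [map_mul] at h
  have h2 := congrArg (pathQuotMap k s t I) h
  rw [map_mul] at h2
  exact h2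

lemma mul_tgt (k : Type) [CommRing k] {nV mE : ℕ} (s t : Fin mE → Fin nV)
    (I : Submodule k (PathAlg k (Fin nV) (Fin mE) s t)) (e : Fin mE) :
    qA k s t I e * qV k s t I (t e) = qA k s t I e := by
  have h := RingQuot.mkAlgHom_rel k (PathRel.tgt (k := k) (s := s) (t := t) e)
  rw [map_mul] at h
  have h2 := congrArg (pathQuotMap k s t I) h
  rw [map_mul] at h2
  exact h2

lemma prodPath_src (k : Type) [CommRing k] {nV mE : ℕ} (s t : Fin mE → Fin nV)
    (I : Submodule k (PathAlg k (Fin nV) (Fin mE) s t)) (L : List (Fin mE)) (hL : L ≠ []) :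
    qV k s t I (s (L.head hL)) * prodPath k s t I L = prodPath k s t I L := by
  cases L with
  | nil => exact absurd rfl hL
  | cons a L =>
    simp only [prodPath, List.map_cons, List.prod_cons, List.head_cons]
    rw [← mul_assoc, src_mul]

lemma prodPath_tgt (k : Type) [CommRing k] {nV mE : ℕ} (s t : Fin mE → Fin nV)
    (I : Submodule k (PathAlg k (Fin nV) (Fin mE) s t)) (L : List (Fin mE)) (hL : L ≠ []) :
    prodPath k s t I L * qV k s t I (t (L.getLast hL)) = prodPath k s t I L := by
  obtain ⟨M, a, rfl⟩ : ∃ M a, L = M ++ [a] :=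
    ⟨L.dropLast, L.getLast hL, (List.dropLast_append_getLast hL).symm⟩
  simp only [prodPath, List.map_append, List.prod_append, List.map_cons, List.map_nil,
    List.prod_singleton, List.getLast_append_singleton]
  rw [mul_assoc, mul_tgt]

/-- A right-annihilated element concentrated at one end vertex spans its own right ideal. -/
lemma mul_mem_span (k : Type) [Field k] {nV mE : ℕ} (s t : Fin mE → Fin nV)
    (I : Submodule k (PathAlg k (Fin nV) (Fin mE) s t)) (w : PathQuot k s t I) (x : Fin nV)
    (hx : w * qV k s t I x = w) (hw : ∀ d, w * qA k s t I d = 0) (b : PathQuot k s t I) :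
    ∃ c : k, w * b = c • w := by
  obtain ⟨b, rfl⟩ : ∃ b', pathQuotMap k s t I b' = b := RingQuot.mkAlgHom_surjective k _ b
  obtain ⟨b, rfl⟩ := RingQuot.mkAlgHom_surjective k _ b
  induction b using FreeAlgebra.induction with
  | grade0 r => exact ⟨r, by rw [AlgHom.commutes, AlgHom.commutes, Algebra.algebraMap_eq_smul_one,
      mul_smul_comm, mul_one]⟩
  | grade1 g =>
    cases g with
    | vert y =>
      change ∃ c : k, w * qV k s t I y = c • w
      by_cases h : x = y
      · exact ⟨1, by rw [← h, hx, one_smul]⟩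
      · refine ⟨0, ?_⟩
        rw [← hx, mul_assoc, qV_mul, if_neg h, mul_zero, zero_smul]
    | arr e => exact ⟨0, by rw [zero_smul]; exact hw e⟩
  | mul a b ha hb =>
    obtain ⟨c, hc⟩ := ha
    obtain ⟨d, hd⟩ := hb
    exact ⟨c * d, by rw [map_mul, map_mul, ← mul_assoc, hc, smul_mul_assoc, hd, smul_smul]⟩
  | add a b ha hb =>
    obtain ⟨c, hc⟩ := ha
    obtain ⟨d, hd⟩ := hb
    exact ⟨c + d, by rw [map_add, map_add, mul_add, hc, hd, add_smul]⟩

lemma tr_ne_zero (k : Type) [Field k] {nV mE : ℕ} (s t : Fin mE → Fin nV)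
    (I : Submodule k (PathAlg k (Fin nV) (Fin mE) s t)) (w : PathQuot k s t I) (x : Fin nV)
    (hx : w * qV k s t I x = w) (hw : ∀ d, w * qA k s t I d = 0) (h0 : w ≠ 0)
    (Tr : PathQuot k s t I →ₗ[k] k)
    (hnd : ∀ a : PathQuot k s t I, a ≠ 0 → ∃ b : PathQuot k s t I, Tr (a * b) ≠ 0) :
    Tr w ≠ 0 := by
  obtain ⟨b, hb⟩ := hnd w h0
  obtain ⟨c, hc⟩ := mul_mem_span k s t I w x hx hw b
  intro h
  apply hb
  rw [hc, map_smul, h, smul_zero]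

lemma tr_path_ne_zero (k : Type) [Field k] {nV mE : ℕ} (s t : Fin mE → Fin nV)
    (I : Submodule k (PathAlg k (Fin nV) (Fin mE) s t)) (L : List (Fin mE)) (hL : L ≠ [])
    (hu : prodPath k s t I L ≠ 0)
    (hmax : ∀ d : Fin mE, prodPath k s t I L * pathQuotMap k s t I (pA k s t d) = 0)
    (Tr : PathQuot k s t I →ₗ[k] k)
    (hnd : ∀ a : PathQuot k s t I, a ≠ 0 → ∃ b : PathQuot k s t I, Tr (a * b) ≠ 0) :
    Tr (prodPath k s t I L) ≠ 0 :=
  tr_ne_zero k s t I _ _ (prodPath_tgt k s t I L hL) hmax hu Tr hnd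

lemma path_cycle (k : Type) [Field k] {nV mE : ℕ} (s t : Fin mE → Fin nV)
    (I : Submodule k (PathAlg k (Fin nV) (Fin mE) s t)) (L : List (Fin mE)) (hL : L ≠ [])
    (hu : prodPath k s t I L ≠ 0)
    (hmax : ∀ d : Fin mE, prodPath k s t I L * pathQuotMap k s t I (pA k s t d) = 0)
    (Tr : PathQuot k s t I →ₗ[k] k)
    (hTr : ∀ a b : PathQuot k s t I, Tr (a * b) = Tr (b * a))
    (hnd : ∀ a : PathQuot k s t I, a ≠ 0 → ∃ b : PathQuot k s t I, Tr (a * b) ≠ 0) :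
    s (L.head hL) = t (L.getLast hL) := by
  by_contra hne
  apply tr_path_ne_zero k s t I L hL hu hmax Tr hnd
  rw [← prodPath_src k s t I L hL, hTr, ← prodPath_tgt k s t I L hL, mul_assoc, qV_mul,
    if_neg (Ne.symm hne), mul_zero, map_zero]

lemma path_unique (k : Type) [Field k] {nV mE : ℕ} (s t : Fin mE → Fin nV)
    (I : Submodule k (PathAlg k (Fin nV) (Fin mE) s t))
    (hsb : ∀ e f f' : Fin mE, qA k s t I e * qA k s t I f ≠ 0 →
      qA k s t I e * qA k s t I f' ≠ 0 → f = f')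
    (M : List (Fin mE)) : ∀ (M' : List (Fin mE)) (a : Fin mE) (p : PathQuot k s t I),
    p * prodPath k s t I (a :: M) ≠ 0 → p * prodPath k s t I (a :: M') ≠ 0 →
    (∀ d, p * prodPath k s t I (a :: M) * qA k s t I d = 0) →
    (∀ d, p * prodPath k s t I (a :: M') * qA k s t I d = 0) → M = M' := by
  induction M with
  | nil =>
    intro M' a p h1 h2 h3 h4
    cases M' with
    | nil => rfl
    | cons b M' =>
      exfalso
      apply h2
      have := h3 b
      simp only [prodPath, List.map_cons, List.prod_cons, List.map_nil, List.prod_nil,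
        mul_one] at this ⊢
      rw [← mul_assoc, ← mul_assoc, this, zero_mul]
  | cons b M ih =>
    intro M' a p h1 h2 h3 h4
    cases M' with
    | nil =>
      exfalso
      apply h1
      have := h4 b
      simp only [prodPath, List.map_cons, List.prod_cons, List.map_nil, List.prod_nil,
        mul_one] at this ⊢
      rw [← mul_assoc, ← mul_assoc, this, zero_mul]
    | cons c M' =>
      have key : ∀ (c : Fin mE) (M' : List (Fin mE)), p * prodPath k s t I (a :: c :: M') =
          (p * qA k s t I a) * prodPath k s t I (c :: M') := by
        intro c M'
        simp only [prodPath, List.map_cons, List.prod_cons, mul_assoc]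
      have key2 : ∀ (c : Fin mE) (M' : List (Fin mE)), p * prodPath k s t I (a :: c :: M') ≠ 0 →
          qA k s t I a * qA k s t I c ≠ 0 := by
        intro c M' h h0
        apply h
        simp only [prodPath, List.map_cons, List.prod_cons]
        rw [← mul_assoc (pathQuotMap k s t I (pA k s t a)), h0, zero_mul, mul_zero]
      obtain rfl := hsb a b c (key2 b M h1) (key2 c M' h2)
      simp only [key] at h1 h2 h3 h4
      rw [ih M' b _ h1 h2 h3 h4]

/-- Let `A = kQ/I` be a symmetric special biserial algebra (`Q` connected,
`I` admissible) and let `u = u₁⋯u_r` be a product of arrows which is nonzero in `A` and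
satisfies `uδ = 0` for every arrow `δ`.  Then: (1) `δu = 0` for every arrow `δ`; (2) `u` is a
cycle; (3) such a `u` is determined by its first arrow; (4) two such `u, v` starting at the
same vertex agree up to a nonzero scalar; (5) `Tr(u) ≠ 0` for every non-degenerate symmetric
trace form on `A`. -/
theorem statement17 (k : Type) [Field k] [IsAlgClosed k]
    (nV mE : ℕ) (s t : Fin mE → Fin nV) (hconn : QConnected s t)
    (I : Submodule k (PathAlg k (Fin nV) (Fin mE) s t)) (hI : IsAdmissible k s t I)
    (hsym : IsSymmetricAlgebra' k (PathQuot k s t I))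
    (hsb : SpecialBiserialPres k s t (A := PathQuot k s t I) (pathQuotMap k s t I))
    (L : List (Fin mE)) (hL : L ≠ [])
    (hu : prodPath k s t I L ≠ 0)
    (hmax : ∀ d : Fin mE, prodPath k s t I L * pathQuotMap k s t I (pA k s t d) = 0) :
    (∀ d : Fin mE, pathQuotMap k s t I (pA k s t d) * prodPath k s t I L = 0) ∧
    (s (L.head hL) = t (L.getLast hL)) ∧
    (∀ (L' : List (Fin mE)) (hL' : L' ≠ []), prodPath k s t I L' ≠ 0 →
      (∀ d : Fin mE, prodPath k s t I L' * pathQuotMap k s t I (pA k s t d) = 0) →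
      L.head hL = L'.head hL' → L = L') ∧
    (∀ (L' : List (Fin mE)) (hL' : L' ≠ []), prodPath k s t I L' ≠ 0 →
      (∀ d : Fin mE, prodPath k s t I L' * pathQuotMap k s t I (pA k s t d) = 0) →
      s (L'.head hL') = s (L.head hL) →
      ∃ c : k, c ≠ 0 ∧ prodPath k s t I L = c • prodPath k s t I L') ∧
    (∀ Tr : PathQuot k s t I →ₗ[k] k,
      (∀ a b : PathQuot k s t I, Tr (a * b) = Tr (b * a)) →
      (∀ a : PathQuot k s t I, a ≠ 0 → ∃ b : PathQuot k s t I, Tr (a * b) ≠ 0) →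
      Tr (prodPath k s t I L) ≠ 0) := by
  obtain ⟨h1, h2, h3, h4⟩ := hsb
  obtain ⟨T, hT, hTn⟩ := hsym
  refine ⟨?_, path_cycle k s t I L hL hu hmax T hT hTn, ?_, ?_, ?_⟩
  · intro d
    by_contra h
    have he : pathQuotMap k s t I (pA k s t d) * prodPath k s t I L = prodPath k s t I (d :: L) := by
      simp only [prodPath, List.map_cons, List.prod_cons]
    have := tr_path_ne_zero k s t I (d :: L) (by simp) (he ▸ h)
      (fun d' => by rw [← he, mul_assoc, hmax, mul_zero]) T hTn
    apply this
    rw [← he, hT, hmax, map_zero]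
  · intro L' hL' hu' hmax' hh
    cases L with
    | nil => exact absurd rfl hL
    | cons a M =>
      cases L' with
      | nil => exact absurd rfl hL'
      | cons b M' =>
        simp only [List.head_cons] at hh
        subst hh
        rw [path_unique k s t I (fun e f f' => by
          intro ha hb
          rw [← map_mul] at ha hb
          exact h3 e f f' ha hb) M M' a 1 (by rwa [one_mul]) (by rwa [one_mul])
          (by simpa only [one_mul] using hmax) (by simpa only [one_mul] using hmax')]
  · intro L' hL' hu' hmax' hh
    have a1 := tr_path_ne_zero k s t I L hL hu hmax T hTn
    have a2 := tr_path_ne_zero k s t I L' hL' hu' hmax' T hTn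
    have c1 := path_cycle k s t I L hL hu hmax T hT hTn
    have c2 := path_cycle k s t I L' hL' hu' hmax' T hT hTn
    have e1 := prodPath_tgt k s t I L hL
    have e2 := prodPath_tgt k s t I L' hL'
    rw [← c1] at e1
    rw [← c2, hh] at e2
    refine ⟨T (prodPath k s t I L) / T (prodPath k s t I L'), div_ne_zero a1 a2, ?_⟩
    by_contra hne
    set c : k := T (prodPath k s t I L) / T (prodPath k s t I L') with hc
    refine tr_ne_zero k s t I (prodPath k s t I L + (-c) • prodPath k s t I L') (s (L.head hL))
      ?_ ?_ ?_ T hTn ?_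
    · rw [add_mul, smul_mul_assoc, e1, e2]
    · intro d
      rw [add_mul, smul_mul_assoc, hmax, hmax', smul_zero, add_zero]
    · intro h0
      apply hne
      calc prodPath k s t I L
          = prodPath k s t I L + ((-c) + c) • prodPath k s t I L' := by
            rw [neg_add_cancel, zero_smul, add_zero]
        _ = c • prodPath k s t I L' := by rw [add_smul, ← add_assoc, h0, zero_add]
    · rw [map_add, map_smul, smul_eq_mul, neg_mul, hc, div_mul_cancel₀ _ a2, add_neg_cancel]
  · intro Tr _ hn
    exact tr_path_ne_zero k s t I L hL hu hmax Tr hn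


end
end QH
end
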